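/- Let K and L be convex bodies in R^m and t ∈ (0,1). If the surface area measure of K is dominated by that of L (S(K,·) ≤ S(L,·) as measures) and M is the convex body with S(M,·) = S(L,·) − t·S(K,·), then Vol(L)^{(m−1)/m} ≥ Vol(M)^{(m−1)/m} + t · Vol(K)^{(m−1)/m} ≥ t · Vol(K)^{(m−1)/m}. -/

import Mathlib

open MeasureTheory Set
open scoped ENNReal Pointwise RealInnerProductSpace Topology

noncomputable section

abbrev Euc (m : ℕ) : Type := EuclideanSpace ℝ (Fin m)

/-- A convex body: compact convex set with nonempty interior. -/
def IsConvexBody {m : ℕ} (K : Set (Euc m)) : Prop :=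
  Convex ℝ K ∧ IsCompact K ∧ (interior K).Nonempty

/-- A (compact convex) polytope: convex hull of a finite set. -/
def IsPolytope {m : ℕ} (P : Set (Euc m)) : Prop :=
  ∃ s : Finset (Euc m), P = convexHull ℝ (s : Set (Euc m))

def unitSphere (m : ℕ) : Set (Euc m) := Metric.sphere 0 1

/-- `n` is an outward unit normal to `K` at the boundary point `x`. -/
def IsOutwardNormalAt {m : ℕ} (K : Set (Euc m)) (x n : Euc m) : Prop :=
  x ∈ frontier K ∧ ‖n‖ = 1 ∧ ∀ y ∈ K, ⟪y - x, n⟫ ≤ 0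

open Classical in
/-- The (set-valued choice of) Gauss map of `K`. -/
def gaussMap {m : ℕ} (K : Set (Euc m)) (x : Euc m) : Euc m :=
  if h : ∃ n, IsOutwardNormalAt K x n then h.choose else 0

/-- The surface area measure of `K`: the pushforward under the Gauss map of the
`(m-1)`-dimensional Hausdorff measure on the boundary of `K`. -/
def surfMeasure {m : ℕ} (K : Set (Euc m)) : Measure (Euc m) :=
  Measure.map (gaussMap K) (μH[(m : ℝ) - 1].restrict (frontier K))

/-- The face of `P` in direction `n`. -/
def faceIn {m : ℕ} (P : Set (Euc m)) (n : Euc m) : Set (Euc m) :=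
  {x ∈ P | ∀ y ∈ P, ⟪y, n⟫ ≤ ⟪x, n⟫}

/-- The `(m-1)`-dimensional volume of the face of `P` in direction `n`. -/
def faceArea {m : ℕ} (P : Set (Euc m)) (n : Euc m) : ℝ≥0∞ :=
  μH[(m : ℝ) - 1] (faceIn P n)

/-- `n` is the outward unit normal to a facet ((m-1)-dimensional face) of `P`. -/
def IsFacetNormal {m : ℕ} (P : Set (Euc m)) (n : Euc m) : Prop :=
  ‖n‖ = 1 ∧ 0 < faceArea P n

theorem euclideanHausdorffMeasure_image_le {m d : ℕ} {s : Set (Euc m)} {f : Euc m → Euc m}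
    {θ : ℝ} (hθ : 0 ≤ θ) (hf : ∀ x ∈ s, ∀ y ∈ s, ‖f x - f y‖ ≤ θ * ‖x - y‖) :
    μHE[d] (f '' s) ≤ ENNReal.ofReal θ ^ d * μHE[d] s := by
  have hlip : LipschitzOnWith θ.toNNReal f s := by
    refine LipschitzOnWith.of_dist_le_mul fun x hx y hy => ?_
    rw [dist_eq_norm, dist_eq_norm, Real.coe_toNNReal _ hθ]
    exact hf x hx y hy
  have h := hlip.hausdorffMeasure_image_le (d := d) (by positivity)
  rw [ENNReal.rpow_natCast] at h
  simp only [Measure.euclideanHausdorffMeasure_def, Measure.smul_apply]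
  rw [mul_smul_comm]
  gcongr
  exact h

theorem le_euclideanHausdorffMeasure_image {m d : ℕ} {s : Set (Euc m)} {f : Euc m → Euc m}
    {θ : ℝ} (hθ : 0 ≤ θ) (hf : ∀ x ∈ s, ∀ y ∈ s, ‖x - y‖ ≤ θ * ‖f x - f y‖) :
    μHE[d] s ≤ ENNReal.ofReal θ ^ d * μHE[d] (f '' s) := by
  have hinj : InjOn f s := fun x hx y hy hxy => by
    have := hf x hx y hy
    rw [hxy, sub_self, norm_zero, mul_zero] at this
    exact sub_eq_zero.1 (norm_le_zero_iff.1 this)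
  have hinv := hinj.leftInvOn_invFunOn
  calc μHE[d] s = μHE[d] (Function.invFunOn f s '' (f '' s)) := by rw [hinv.image_image]
    _ ≤ _ := by
      refine euclideanHausdorffMeasure_image_le hθ ?_
      rintro _ ⟨x, hx, rfl⟩ _ ⟨y, hy, rfl⟩
      rw [hinv hx, hinv hy]
      exact hf x hx y hy

theorem euclideanHausdorffMeasure_smul_set {m : ℕ} (d : ℕ) {r : ℝ} (hr : 0 < r) (s : Set (Euc m)) :
    μHE[d] (r • s) = ENNReal.ofReal (r ^ d) * μHE[d] s := by
  have h := Measure.euclideanHausdorffMeasure_smul₀ d hr.ne' s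
  rw [h, ENNReal.smul_def, smul_eq_mul, ENNReal.ofReal_pow hr.le]
  congr 1
  rw [ENNReal.coe_pow]
  congr 1
  rw [← Real.enorm_eq_ofReal hr.le]; rfl

/-- Cavalieri's principle for the hyperplanes `⟪u, ·⟫ = s`. -/
theorem volume_eq_lintegral_slices {m : ℕ} {u : Euc m} (hu : u ≠ 0) {t : Set (Euc m)}
    (ht : MeasurableSet t) :
    volume t = ENNReal.ofReal ‖u‖⁻¹ * ∫⁻ s : ℝ, μHE[m - 1] (t ∩ {y | ⟪u, y⟫ = s}) := by
  have hu' : 0 < ‖u‖ := norm_pos_iff.2 hu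
  set v : Euc m := (‖u‖ ^ 2)⁻¹ • u with hv
  have hv0 : v ≠ 0 := smul_ne_zero (by positivity) hu
  have h := EuclideanGeometry.euclideanHausdorffMeasure_eq_lintegral (0 : Euc m) hv0 ht
  rw [InnerProductSpace.euclideanHausdorffMeasure_eq_volume, finrank_euclideanSpace_fin] at h
  rw [h]
  congr 1
  · rw [← ofReal_norm, hv, norm_smul, norm_inv, norm_pow, norm_norm]
    congr 1
    field_simp
  · refine lintegral_congr fun s => ?_
    congr 2
    ext y
    simp only [SetLike.mem_coe, AffineSubspace.mem_mk', vsub_eq_sub, vadd_eq_add, add_zero,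
      Submodule.mem_orthogonal_singleton_iff_inner_right, mem_ofPred_eq]
    rw [hv, inner_smul_left, inner_sub_right, inner_smul_right, inner_smul_right,
      real_inner_self_eq_norm_sq, inv_mul_cancel₀ (by positivity), mul_one]
    simp [hu, sub_eq_zero]

theorem lintegral_Ioc_pow (m : ℕ) (hm : 1 ≤ m) :
    ∫⁻ s in Ioc (0 : ℝ) 1, ENNReal.ofReal (s ^ (m - 1)) = ENNReal.ofReal (m : ℝ)⁻¹ := by
  rw [← ofReal_integral_eq_lintegral_ofReal]
  · rw [← intervalIntegral.integral_of_le zero_le_one, integral_pow]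
    have : ((m - 1 : ℕ) : ℝ) + 1 = m := by rw [Nat.cast_sub hm]; simp
    rw [this, Nat.sub_add_cancel hm]
    simp [show m ≠ 0 by omega]
  · exact (continuous_pow _).integrableOn_Ioc
  · exact (ae_restrict_iff' measurableSet_Ioc).2
      (Filter.Eventually.of_forall fun s hs => pow_nonneg hs.1.le _)

/-- Volume of the cone with apex `0` over a set in the hyperplane `⟪u, ·⟫ = 1`. -/
theorem volume_cone_of_subset_hyperplane {m : ℕ} (hm : 1 ≤ m) {u : Euc m} (hu : u ≠ 0)
    {B : Set (Euc m)} (hB : B ⊆ {x | ⟪u, x⟫ = 1}) :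
    volume (Ioc (0 : ℝ) 1 • B) = ENNReal.ofReal (‖u‖⁻¹ * (m : ℝ)⁻¹) * μHE[m - 1] B := by
  have hcont : Continuous fun y : Euc m => ⟪u, y⟫ := by fun_prop
  have hint : ∀ c : ℝ≥0∞, ENNReal.ofReal ‖u‖⁻¹ * ∫⁻ s in Ioc (0 : ℝ) 1,
      ENNReal.ofReal (s ^ (m - 1)) * c = ENNReal.ofReal (‖u‖⁻¹ * (m : ℝ)⁻¹) * c := fun c => by
    rw [lintegral_mul_const _ (by fun_prop), lintegral_Ioc_pow m hm,
      ENNReal.ofReal_mul (by positivity), mul_assoc]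
  apply le_antisymm
  · set B' := toMeasurable μHE[m - 1] B ∩ {x | ⟪u, x⟫ = 1} with hB'
    have hB'm : MeasurableSet B' := (measurableSet_toMeasurable _ _).inter
      (isClosed_eq hcont continuous_const).measurableSet
    set t : Set (Euc m) := {y | ⟪u, y⟫ ∈ Ioc (0 : ℝ) 1 ∧ ⟪u, y⟫⁻¹ • y ∈ B'} with ht
    have htm : MeasurableSet t := (hcont.measurable measurableSet_Ioc).inter
      ((hcont.measurable.inv.smul measurable_id) hB'm)
    have hsub : Ioc (0 : ℝ) 1 • B ⊆ t := by
      rintro _ ⟨s, hs, x, hx, rfl⟩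
      have h1 : ⟪u, s • x⟫ = s := by rw [inner_smul_right, hB hx, mul_one]
      simp only [ht, mem_ofPred_eq, h1, smul_smul]
      rw [inv_mul_cancel₀ hs.1.ne', one_smul]
      exact ⟨hs, subset_toMeasurable _ _ hx, hB hx⟩
    refine (measure_mono hsub).trans ?_
    rw [volume_eq_lintegral_slices hu htm, ← hint]
    refine mul_le_mul_right ?_ _
    rw [← lintegral_indicator measurableSet_Ioc]
    refine lintegral_mono fun s => ?_
    by_cases hs : s ∈ Ioc (0 : ℝ) 1
    · rw [indicator_of_mem hs]
      have : t ∩ {y | ⟪u, y⟫ = s} ⊆ s • B' := by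
        rintro y ⟨hy, hys⟩
        rw [mem_smul_set_iff_inv_smul_mem₀ hs.1.ne']
        have := hy.2
        rwa [show ⟪u, y⟫ = s from hys] at this
      refine (measure_mono this).trans ?_
      rw [euclideanHausdorffMeasure_smul_set _ hs.1, ← measure_toMeasurable (s := B)]
      gcongr
      exact inter_subset_left
    · have : t ∩ {y | ⟪u, y⟫ = s} = ∅ := by
        refine eq_empty_of_forall_notMem ?_
        rintro y ⟨hy, hys⟩
        exact hs (hys ▸ hy.1)
      rw [indicator_of_notMem hs]
      simp [this]
  · rw [← measure_toMeasurable (Ioc (0 : ℝ) 1 • B),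
      volume_eq_lintegral_slices hu (measurableSet_toMeasurable _ _), ← hint]
    refine mul_le_mul_right ?_ _
    rw [← lintegral_indicator measurableSet_Ioc]
    refine lintegral_mono fun s => ?_
    by_cases hs : s ∈ Ioc (0 : ℝ) 1
    · rw [indicator_of_mem hs]
      rw [← euclideanHausdorffMeasure_smul_set _ hs.1]
      refine measure_mono ?_
      rintro _ ⟨x, hx, rfl⟩
      refine ⟨subset_toMeasurable _ _ ⟨s, hs, x, hx, rfl⟩, ?_⟩
      simp only [mem_ofPred_eq]
      rw [inner_smul_right, hB hx, mul_one]
    · rw [indicator_of_notMem hs]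
      exact zero_le

/-- Almost flat pieces: if `g` is positively homogeneous, equal to `1` on `A`, and has subgradients
`u x` at `x ∈ A` close to `u₀`, then the map `y ↦ y + (g y - ⟪u₀, y⟫) u₀ / ‖u₀‖²` flattens `A`
into the hyperplane `⟪u₀, ·⟫ = 1` with small distortion on the cone over `A`. -/
theorem exists_flattening {m : ℕ} {g : Euc m → ℝ} (hg : ∀ s : ℝ, 0 < s → ∀ x, g (s • x) = s * g x)
    {A : Set (Euc m)} {u : Euc m → Euc m} (hgA : ∀ x ∈ A, g x = 1)
    (hu1 : ∀ x ∈ A, ⟪u x, x⟫ = 1) (hug : ∀ x ∈ A, ∀ z, ⟪u x, z⟫ ≤ g z) {u₀ : Euc m}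
    (hu₀ : u₀ ≠ 0) {θ : ℝ} (hθ : 1 < θ) (huA : ∀ x ∈ A, ‖u x - u₀‖ ≤ (1 - θ⁻¹) * ‖u₀‖) :
    ∃ F : Euc m → Euc m, F '' A ⊆ {x | ⟪u₀, x⟫ = 1} ∧
      F '' (Ioc (0 : ℝ) 1 • A) = Ioc (0 : ℝ) 1 • (F '' A) ∧
      (∀ x ∈ Ioc (0 : ℝ) 1 • A, ∀ y ∈ Ioc (0 : ℝ) 1 • A, ‖F x - F y‖ ≤ θ * ‖x - y‖) ∧
      (∀ x ∈ Ioc (0 : ℝ) 1 • A, ∀ y ∈ Ioc (0 : ℝ) 1 • A, ‖x - y‖ ≤ θ * ‖F x - F y‖) := by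
  have hn : 0 < ‖u₀‖ := norm_pos_iff.2 hu₀
  have hθ0 : 0 < θ := by linarith
  set v : Euc m := (‖u₀‖ ^ 2)⁻¹ • u₀ with hv
  have huv : ⟪u₀, v⟫ = 1 := by
    rw [hv, inner_smul_right, real_inner_self_eq_norm_sq, inv_mul_cancel₀ (by positivity)]
  have hvn : ‖v‖ = ‖u₀‖⁻¹ := by
    rw [hv, norm_smul, norm_inv, norm_pow, norm_norm]; field_simp
  set φ : Euc m → ℝ := fun y => g y - ⟪u₀, y⟫ with hφ
  have hφs : ∀ s : ℝ, 0 < s → ∀ x, φ (s • x) = s * φ x := fun s hs x => by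
    simp only [hφ, hg s hs, inner_smul_right]; ring
  set F : Euc m → Euc m := fun y => y + φ y • v with hF
  have hFs : ∀ s : ℝ, 0 < s → ∀ x, F (s • x) = s • F x := fun s hs x => by
    simp only [hF, hφs s hs, smul_add, smul_smul]
  have hone : ∀ x ∈ Ioc (0 : ℝ) 1 • A, ∀ y ∈ Ioc (0 : ℝ) 1 • A,
      φ x - φ y ≤ (1 - θ⁻¹) * ‖u₀‖ * ‖x - y‖ := by
    rintro _ ⟨s, hs, x, hx, rfl⟩ y hy
    have h1 : g (s • x) = ⟪u x, s • x⟫ := by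
      rw [hg s hs.1, hgA x hx, inner_smul_right, hu1 x hx]
    have h2 := hug x hx y
    have h3 : φ (s • x) - φ y ≤ ⟪u x - u₀, s • x - y⟫ := by
      simp only [hφ]
      rw [inner_sub_left, inner_sub_right, inner_sub_right, h1]
      linarith
    exact h3.trans ((real_inner_le_norm _ _).trans (by gcongr; exact huA x hx))
  have habs : ∀ x ∈ Ioc (0 : ℝ) 1 • A, ∀ y ∈ Ioc (0 : ℝ) 1 • A,
      ‖(φ x - φ y) • v‖ ≤ (1 - θ⁻¹) * ‖x - y‖ := fun x hx y hy => by
    have h1 : |φ x - φ y| ≤ (1 - θ⁻¹) * ‖u₀‖ * ‖x - y‖ := by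
      rw [abs_le]
      have h2 := hone x hx y hy
      have h3 := hone y hy x hx
      rw [norm_sub_rev] at h3
      constructor <;> linarith
    rw [norm_smul, hvn, Real.norm_eq_abs]
    calc _ ≤ (1 - θ⁻¹) * ‖u₀‖ * ‖x - y‖ * ‖u₀‖⁻¹ := by gcongr
      _ = _ := by field_simp
  have hsub : ∀ x y, F x - F y = (x - y) + (φ x - φ y) • v := fun x y => by
    simp only [hF, sub_smul]; abel
  refine ⟨F, ?_, ?_, fun x hx y hy => ?_, fun x hx y hy => ?_⟩
  · rintro _ ⟨x, hx, rfl⟩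
    simp only [hF, hφ, mem_ofPred_eq]
    rw [inner_add_right, inner_smul_right, huv, hgA x hx]
    ring
  · ext z
    constructor
    · rintro ⟨_, ⟨s, hs, x, hx, rfl⟩, rfl⟩
      exact ⟨s, hs, F x, ⟨x, hx, rfl⟩, (hFs s hs.1 x).symm⟩
    · rintro ⟨s, hs, _, ⟨x, hx, rfl⟩, rfl⟩
      exact ⟨s • x, ⟨s, hs, x, hx, rfl⟩, hFs s hs.1 x⟩
  · rw [hsub]
    refine (norm_add_le _ _).trans ?_
    have h1 := habs x hx y hy
    have h2 : 1 + (1 - θ⁻¹) ≤ θ := by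
      have : θ + θ⁻¹ - 2 = (θ - 1) ^ 2 * θ⁻¹ := by field_simp; ring
      have : 0 ≤ (θ - 1) ^ 2 * θ⁻¹ := by positivity
      linarith
    nlinarith [norm_nonneg (x - y)]
  · have h1 := habs x hx y hy
    have h2 : ‖x - y‖ ≤ ‖F x - F y‖ + ‖(φ x - φ y) • v‖ := by
      have : x - y = (F x - F y) - (φ x - φ y) • v := by rw [hsub]; abel
      rw [this]; exact norm_sub_le _ _
    have h3 : θ⁻¹ * ‖x - y‖ ≤ ‖F x - F y‖ := by linarith
    rwa [inv_mul_le_iff₀ hθ0] at h3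

/-- Comparison of the volume of the cone over an almost flat piece with its area. -/
theorem volume_cone_comparison {m : ℕ} (hm : 1 ≤ m) {g : Euc m → ℝ}
    (hg : ∀ s : ℝ, 0 < s → ∀ x, g (s • x) = s * g x)
    {A : Set (Euc m)} {u : Euc m → Euc m} (hgA : ∀ x ∈ A, g x = 1)
    (hu1 : ∀ x ∈ A, ⟪u x, x⟫ = 1) (hug : ∀ x ∈ A, ∀ z, ⟪u x, z⟫ ≤ g z) {u₀ : Euc m}
    (hu₀ : u₀ ≠ 0) {θ : ℝ} (hθ : 1 < θ) (huA : ∀ x ∈ A, ‖u x - u₀‖ ≤ (1 - θ⁻¹) * ‖u₀‖) :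
    volume (Ioc (0 : ℝ) 1 • A) ≤
      ENNReal.ofReal θ ^ (2 * m) * (ENNReal.ofReal (‖u₀‖⁻¹ * (m : ℝ)⁻¹) * μHE[m - 1] A) ∧
    ENNReal.ofReal (‖u₀‖⁻¹ * (m : ℝ)⁻¹) * μHE[m - 1] A ≤
      ENNReal.ofReal θ ^ (2 * m) * volume (Ioc (0 : ℝ) 1 • A) := by
  obtain ⟨F, hFA, hFcone, hle, hge⟩ := exists_flattening hg hgA hu1 hug hu₀ hθ huA
  have hAc : A ⊆ Ioc (0 : ℝ) 1 • A := fun x hx => ⟨1, by simp, x, hx, by simp⟩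
  have hvol := volume_cone_of_subset_hyperplane hm hu₀ hFA
  rw [← hFcone] at hvol
  have hθ0 : 0 ≤ θ := by linarith
  have hθ1 : 1 ≤ ENNReal.ofReal θ := by simpa using hθ.le
  have hpow : ENNReal.ofReal θ ^ m * ENNReal.ofReal θ ^ (m - 1) ≤ ENNReal.ofReal θ ^ (2 * m) := by
    rw [← pow_add]; exact pow_le_pow_right₀ hθ1 (by omega)
  rw [← EuclideanSpace.euclideanHausdorffMeasure_eq_volume] at *
  constructor
  · calc _ ≤ _ := le_euclideanHausdorffMeasure_image hθ0 hge
      _ = _ := by rw [hvol]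
      _ ≤ ENNReal.ofReal θ ^ m * (ENNReal.ofReal (‖u₀‖⁻¹ * (m : ℝ)⁻¹) *
          (ENNReal.ofReal θ ^ (m - 1) * μHE[m - 1] A)) := by
        gcongr
        exact euclideanHausdorffMeasure_image_le hθ0 fun x hx y hy => hle x (hAc hx) y (hAc hy)
      _ = (ENNReal.ofReal θ ^ m * ENNReal.ofReal θ ^ (m - 1)) *
          (ENNReal.ofReal (‖u₀‖⁻¹ * (m : ℝ)⁻¹) * μHE[m - 1] A) := by ring
      _ ≤ _ := by gcongr
  · calc _ ≤ ENNReal.ofReal (‖u₀‖⁻¹ * (m : ℝ)⁻¹) *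
          (ENNReal.ofReal θ ^ (m - 1) * μHE[m - 1] (F '' A)) := by
          gcongr
          exact le_euclideanHausdorffMeasure_image hθ0 fun x hx y hy => hge x (hAc hx) y (hAc hy)
      _ = ENNReal.ofReal θ ^ (m - 1) * μHE[m] (F '' (Ioc (0 : ℝ) 1 • A)) := by rw [hvol]; ring
      _ ≤ ENNReal.ofReal θ ^ (m - 1) * (ENNReal.ofReal θ ^ m * μHE[m] (Ioc (0 : ℝ) 1 • A)) := by
        gcongr
        exact euclideanHausdorffMeasure_image_le hθ0 hle
      _ = (ENNReal.ofReal θ ^ m * ENNReal.ofReal θ ^ (m - 1)) * μHE[m] (Ioc (0 : ℝ) 1 • A) := by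
        ring
      _ ≤ _ := by gcongr

/-- A convex body containing the origin in its interior. -/
structure IsCenteredBody {m : ℕ} (K : Set (Euc m)) : Prop where
  convex : Convex ℝ K
  isCompact : IsCompact K
  zero_mem : (0 : Euc m) ∈ interior K

theorem exists_isOutwardNormalAt {m : ℕ} {K : Set (Euc m)} (hc : Convex ℝ K)
    (hi : (interior K).Nonempty) {x : Euc m} (hx : x ∈ frontier K) :
    ∃ n, IsOutwardNormalAt K x n := by
  obtain ⟨f, hf⟩ := geometric_hahn_banach_open_point hc.interior isOpen_interior hx.2
  obtain ⟨a, ha⟩ := hi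
  set v := (InnerProductSpace.toDual ℝ (Euc m)).symm f with hv
  have hvf : ∀ y, ⟪y, v⟫ = f y := fun y => by
    rw [real_inner_comm, hv, InnerProductSpace.toDual_symm_apply]
  have hv0 : v ≠ 0 := fun h => by
    have h1 := hf a ha
    rw [← hvf, ← hvf, h, inner_zero_right, inner_zero_right] at h1
    exact lt_irrefl _ h1
  have hle : ∀ y ∈ K, f y ≤ f x := fun y hy => by
    have : y ∈ closure (interior K) := by
      rw [hc.closure_interior_eq_closure_of_nonempty_interior ⟨a, ha⟩]
      exact subset_closure hy
    exact closure_minimal (fun z hz => (hf z hz).le) (isClosed_le f.continuous continuous_const) this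
  refine ⟨‖v‖⁻¹ • v, hx, ?_, fun y hy => ?_⟩
  · rw [norm_smul, norm_inv, norm_norm, inv_mul_cancel₀ (norm_ne_zero_iff.2 hv0)]
  · rw [inner_smul_right, inner_sub_left, hvf, hvf]
    exact mul_nonpos_of_nonneg_of_nonpos (by positivity) (by linarith [hle y hy])

theorem isOutwardNormalAt_gaussMap {m : ℕ} {K : Set (Euc m)} (hc : Convex ℝ K)
    (hi : (interior K).Nonempty) {x : Euc m} (hx : x ∈ frontier K) :
    IsOutwardNormalAt K x (gaussMap K x) := by
  have h := exists_isOutwardNormalAt hc hi hx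
  rw [gaussMap, dif_pos h]
  exact h.choose_spec

/-- The outward normal rescaled so as to be a subgradient of the gauge. -/
def polarNormal {m : ℕ} (K : Set (Euc m)) (x : Euc m) : Euc m :=
  ⟪gaussMap K x, x⟫⁻¹ • gaussMap K x

namespace IsCenteredBody

variable {m : ℕ} {K : Set (Euc m)}

theorem mem_nhds (hK : IsCenteredBody K) : K ∈ 𝓝 (0 : Euc m) := mem_interior_iff_mem_nhds.1 hK.zero_mem

theorem gauge_smul (s : ℝ) (hs : 0 < s) (x : Euc m) :
    gauge K (s • x) = s * gauge K x := by
  rw [gauge_smul_of_nonneg hs.le, smul_eq_mul]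

theorem mem_iff (hK : IsCenteredBody K) {x : Euc m} : x ∈ K ↔ gauge K x ≤ 1 := by
  rw [gauge_le_one_iff_mem_closure hK.convex hK.mem_nhds, hK.isCompact.isClosed.closure_eq]

theorem gauge_pos (hK : IsCenteredBody K) {x : Euc m} (hx : x ≠ 0) : 0 < gauge K x :=
  (_root_.gauge_pos (absorbent_nhds_zero hK.mem_nhds)
    (NormedSpace.isVonNBounded_of_isBounded ℝ hK.isCompact.isBounded)).2 hx

theorem mem_frontier_iff (hK : IsCenteredBody K) {x : Euc m} : x ∈ frontier K ↔ gauge K x = 1 :=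
  (gauge_eq_one_iff_mem_frontier hK.convex hK.mem_nhds).symm

theorem continuous_gauge (hK : IsCenteredBody K) : Continuous (gauge K) :=
  _root_.continuous_gauge hK.convex hK.mem_nhds

theorem ne_zero_of_mem_frontier (hK : IsCenteredBody K) {x : Euc m} (hx : x ∈ frontier K) :
    x ≠ 0 := by
  rintro rfl
  exact hx.2 hK.zero_mem

theorem inv_gauge_smul_mem_frontier (hK : IsCenteredBody K) {y : Euc m} (hy : y ≠ 0) :
    (gauge K y)⁻¹ • y ∈ frontier K := by
  have := hK.gauge_pos hy
  rw [hK.mem_frontier_iff, gauge_smul _ (by positivity), inv_mul_cancel₀ this.ne']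

theorem inner_gaussMap_pos (hK : IsCenteredBody K) {x : Euc m} (hx : x ∈ frontier K) :
    0 < ⟪gaussMap K x, x⟫ := by
  obtain ⟨-, hn, hle⟩ := isOutwardNormalAt_gaussMap hK.convex ⟨0, hK.zero_mem⟩ hx
  obtain ⟨r, hr, hball⟩ := Metric.mem_nhds_iff.1 hK.mem_nhds
  have h := hle ((r / 2) • gaussMap K x) (hball (by
    rw [mem_ball_zero_iff, norm_smul, hn, mul_one, Real.norm_of_nonneg (by positivity)]
    linarith))
  rw [inner_sub_left, inner_smul_left, real_inner_self_eq_norm_sq, hn, real_inner_comm] at h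
  simp only [conj_trivial] at h
  linarith

theorem inner_polarNormal (hK : IsCenteredBody K) {x : Euc m} (hx : x ∈ frontier K) :
    ⟪polarNormal K x, x⟫ = 1 := by
  rw [polarNormal, inner_smul_left, conj_trivial, inv_mul_cancel₀ (hK.inner_gaussMap_pos hx).ne']

theorem polarNormal_ne_zero (hK : IsCenteredBody K) {x : Euc m} (hx : x ∈ frontier K) :
    polarNormal K x ≠ 0 := fun h => by
  have := hK.inner_polarNormal hx
  rw [h, inner_zero_left] at this
  exact zero_ne_one this

theorem gaussMap_eq (hK : IsCenteredBody K) {x : Euc m} (hx : x ∈ frontier K) :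
    gaussMap K x = ‖polarNormal K x‖⁻¹ • polarNormal K x := by
  have hp := hK.inner_gaussMap_pos hx
  obtain ⟨-, hn, -⟩ := isOutwardNormalAt_gaussMap hK.convex ⟨0, hK.zero_mem⟩ hx
  rw [polarNormal, norm_smul, hn, mul_one, norm_inv, inv_inv, smul_smul,
    Real.norm_of_nonneg hp.le, mul_inv_cancel₀ hp.ne', one_smul]

theorem inner_polarNormal_le_one (hK : IsCenteredBody K) {x : Euc m} (hx : x ∈ frontier K)
    {z : Euc m} (hz : z ∈ K) : ⟪polarNormal K x, z⟫ ≤ 1 := by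
  have hp := hK.inner_gaussMap_pos hx
  obtain ⟨-, hn, hle⟩ := isOutwardNormalAt_gaussMap hK.convex ⟨0, hK.zero_mem⟩ hx
  have h := hle z hz
  rw [real_inner_comm, inner_sub_right] at h
  rw [polarNormal, inner_smul_left, conj_trivial, inv_mul_le_iff₀ hp]
  linarith

theorem inner_polarNormal_le (hK : IsCenteredBody K) {x : Euc m} (hx : x ∈ frontier K)
    (z : Euc m) : ⟪polarNormal K x, z⟫ ≤ gauge K z := by
  rcases eq_or_ne z 0 with rfl | hz
  · simp
  have hg := hK.gauge_pos hz
  have h := hK.inner_polarNormal_le_one hx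
    (hK.isCompact.isClosed.frontier_subset (hK.inv_gauge_smul_mem_frontier hz))
  rwa [inner_smul_right, inv_mul_le_iff₀ hg, mul_one] at h

theorem gradient_gauge_eq (hK : IsCenteredBody K) {y : Euc m} (hy : y ≠ 0)
    (hd : DifferentiableAt ℝ (gauge K) y) :
    gradient (gauge K) y = polarNormal K ((gauge K y)⁻¹ • y) := by
  have hg := hK.gauge_pos hy
  have hx := hK.inv_gauge_smul_mem_frontier hy
  set u := polarNormal K ((gauge K y)⁻¹ • y) with hu
  have h1 : ⟪u, y⟫ = gauge K y := by
    have := hK.inner_polarNormal hx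
    rwa [← hu, inner_smul_right, inv_mul_eq_one₀ hg.ne', eq_comm] at this
  have hmin : IsLocalMin (fun z => gauge K z - innerSL ℝ u z) y :=
    Filter.Eventually.of_forall fun z => by
      simp only [innerSL_apply_apply]
      rw [h1, sub_self]
      linarith [hK.inner_polarNormal_le hx z]
  have h2 := hmin.hasFDerivAt_eq_zero (hd.hasFDerivAt.sub (innerSL ℝ u).hasFDerivAt)
  refine HasGradientAt.gradient ?_
  rw [hasGradientAt_iff_hasFDerivAt]
  have h3 : InnerProductSpace.toDual ℝ (Euc m) u = fderiv ℝ (gauge K) y := (sub_eq_zero.1 h2).symm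
  rw [h3]
  exact hd.hasFDerivAt

theorem differentiableAt_gauge_smul {s : ℝ} (hs : 0 < s) {y : Euc m}
    (hd : DifferentiableAt ℝ (gauge K) y) : DifferentiableAt ℝ (gauge K) (s • y) := by
  have : gauge K = fun z => s * gauge K (s⁻¹ • z) := by
    ext z
    rw [← gauge_smul s hs, smul_inv_smul₀ hs.ne']
  rw [this]
  refine DifferentiableAt.const_mul (DifferentiableAt.comp (s • y) (g := gauge K) ?_ (by fun_prop)) s
  rwa [inv_smul_smul₀ hs.ne']

theorem gradient_gauge_smul (hK : IsCenteredBody K) {s : ℝ} (hs : 0 < s) {y : Euc m} (hy : y ≠ 0)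
    (hd : DifferentiableAt ℝ (gauge K) y) :
    gradient (gauge K) (s • y) = gradient (gauge K) y := by
  rw [hK.gradient_gauge_eq hy hd, hK.gradient_gauge_eq (smul_ne_zero hs.ne' hy)
    (differentiableAt_gauge_smul hs hd), gauge_smul s hs, smul_smul, mul_inv, mul_right_comm,
    inv_mul_cancel₀ hs.ne', one_mul]

theorem measurable_gradient (g : Euc m → ℝ) : Measurable (gradient g) :=
  (InnerProductSpace.toDual ℝ (Euc m)).symm.continuous.measurable.comp (measurable_fderiv ℝ g)

theorem ae_differentiableAt_gauge (hK : IsCenteredBody K) :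
    ∀ᵐ y : Euc m, DifferentiableAt ℝ (gauge K) y :=
  let ⟨_, h⟩ := hK.convex.lipschitz_gauge hK.mem_nhds
  h.ae_differentiableAt

end IsCenteredBody

theorem ENNReal.le_of_forall_one_lt_le_pow_mul {a b : ℝ≥0∞} (k : ℕ)
    (h : ∀ θ : ℝ, 1 < θ → a ≤ ENNReal.ofReal θ ^ k * b) : a ≤ b := by
  have h1 : Filter.Tendsto (fun θ : ℝ => ENNReal.ofReal θ ^ k * b) (𝓝[>] 1) (𝓝 (1 * b)) := by
    refine ENNReal.Tendsto.mul_const ?_ (Or.inl one_ne_zero)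
    have h2 : Filter.Tendsto (fun θ : ℝ => ENNReal.ofReal θ ^ k) (𝓝 1)
        (𝓝 (ENNReal.ofReal 1 ^ k)) :=
      ((ENNReal.continuous_pow k).comp ENNReal.continuous_ofReal).tendsto 1
    rw [ENNReal.ofReal_one, one_pow] at h2
    exact h2.mono_left nhdsWithin_le_nhds
  rw [one_mul] at h1
  exact ge_of_tendsto h1 (Filter.eventually_of_mem self_mem_nhdsWithin fun θ hθ => h θ hθ)

theorem measure_le_of_countable_cover {α : Type*} [MeasurableSpace α] {μ ν : Measure α}
    {s : ℕ → Set α} (hs : ∀ n, MeasurableSet (s n)) (hμ : μ (⋃ n, s n)ᶜ = 0)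
    (h : ∀ n A, A ⊆ s n → MeasurableSet A → μ A ≤ ν A) : μ ≤ ν := by
  refine Measure.le_iff.2 fun A hA => ?_
  have hdm : ∀ n, MeasurableSet (A ∩ disjointed s n) := fun n => hA.inter (MeasurableSet.disjointed hs n)
  have hdd : Pairwise (Function.onFun Disjoint fun n => A ∩ disjointed s n) := fun i j hij =>
    (disjoint_disjointed s hij).mono inter_subset_right inter_subset_right
  calc μ A ≤ μ (⋃ n, A ∩ disjointed s n) + μ (⋃ n, s n)ᶜ := by
        refine (measure_mono fun x hx => ?_).trans (measure_union_le _ _)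
        rw [← inter_iUnion, iUnion_disjointed]
        by_cases h : x ∈ ⋃ n, s n
        exacts [Or.inl ⟨hx, h⟩, Or.inr h]
    _ = ∑' n, μ (A ∩ disjointed s n) := by rw [hμ, add_zero, measure_iUnion hdd hdm]
    _ ≤ ∑' n, ν (A ∩ disjointed s n) := ENNReal.tsum_le_tsum fun n =>
        h n _ (inter_subset_right.trans (disjointed_subset s n)) (hdm n)
    _ = ν (⋃ n, A ∩ disjointed s n) := (measure_iUnion hdd hdm).symm
    _ ≤ ν A := measure_mono (iUnion_subset fun n => inter_subset_left)

theorem exists_denseSeq_near {m : ℕ} {v : Euc m} (hv : v ≠ 0) {θ : ℝ} (hθ : 1 < θ) :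
    ∃ n, ‖v - TopologicalSpace.denseSeq (Euc m) n‖ <
      (1 - θ⁻¹) * ‖TopologicalSpace.denseSeq (Euc m) n‖ := by
  have hθ' : 0 < 1 - θ⁻¹ := by linarith [inv_lt_one_of_one_lt₀ hθ]
  have ho : IsOpen {w : Euc m | ‖v - w‖ < (1 - θ⁻¹) * ‖w‖} :=
    isOpen_lt (by fun_prop) (by fun_prop)
  obtain ⟨n, hn⟩ := (TopologicalSpace.denseRange_denseSeq (Euc m)).exists_mem_open ho
    ⟨v, by simpa using mul_pos hθ' (norm_pos_iff.2 hv)⟩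
  exact ⟨n, hn⟩

theorem ne_zero_of_norm_sub_lt {m : ℕ} {v w : Euc m} {c : ℝ} (h : ‖v - w‖ < c * ‖w‖) : w ≠ 0 := by
  rintro rfl
  rw [norm_zero, mul_zero] at h
  exact absurd h (norm_nonneg _).not_gt

namespace IsCenteredBody

variable {m : ℕ} {K : Set (Euc m)}

theorem cone_comparison (hK : IsCenteredBody K) (hm : 1 ≤ m) {A : Set (Euc m)}
    (hA : A ⊆ frontier K) {w : Euc m} (hw : w ≠ 0) {θ : ℝ} (hθ : 1 < θ)
    (hwA : ∀ x ∈ A, ‖polarNormal K x - w‖ < (1 - θ⁻¹) * ‖w‖) :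
    volume (Ioc (0 : ℝ) 1 • A) ≤
      ENNReal.ofReal θ ^ (2 * m) * (ENNReal.ofReal (‖w‖⁻¹ * (m : ℝ)⁻¹) * μHE[m - 1] A) ∧
    ENNReal.ofReal (‖w‖⁻¹ * (m : ℝ)⁻¹) * μHE[m - 1] A ≤
      ENNReal.ofReal θ ^ (2 * m) * volume (Ioc (0 : ℝ) 1 • A) :=
  volume_cone_comparison hm (g := gauge K) (fun s hs x => gauge_smul s hs x)
    (fun _ hx => hK.mem_frontier_iff.1 (hA hx)) (fun _ hx => hK.inner_polarNormal (hA hx))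
    (fun _ hx z => hK.inner_polarNormal_le (hA hx) z) hw hθ fun x hx => (hwA x hx).le

theorem measure_frontier_not_differentiableAt (hK : IsCenteredBody K) (hm : 1 ≤ m) :
    μHE[m - 1] (frontier K \ {x | DifferentiableAt ℝ (gauge K) x}) = 0 := by
  set N := frontier K \ {x | DifferentiableAt ℝ (gauge K) x} with hN
  set w := TopologicalSpace.denseSeq (Euc m)
  have h2 : (1 : ℝ) < 2 := one_lt_two
  have hcov : N ⊆ ⋃ n, {x ∈ N | ‖polarNormal K x - w n‖ < (1 - 2⁻¹) * ‖w n‖} := fun x hx => by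
    obtain ⟨n, hn⟩ := exists_denseSeq_near (hK.polarNormal_ne_zero hx.1) h2
    exact mem_iUnion.2 ⟨n, hx, hn⟩
  refine measure_mono_null hcov (measure_iUnion_null fun n => ?_)
  set A := {x ∈ N | ‖polarNormal K x - w n‖ < (1 - 2⁻¹) * ‖w n‖} with hA
  rcases A.eq_empty_or_nonempty with h | ⟨x, hx⟩
  · rw [h, measure_empty]
  have hw := ne_zero_of_norm_sub_lt hx.2
  have h3 := (hK.cone_comparison hm (fun x hx => hx.1.1) hw h2 (A := A) fun x hx => hx.2).2
  have h4 : volume (Ioc (0 : ℝ) 1 • A) = 0 := by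
    refine measure_mono_null ?_ (ae_iff.1 hK.ae_differentiableAt_gauge)
    rintro _ ⟨s, hs, x, hx, rfl⟩ hd
    refine hx.1.2 ?_
    have := differentiableAt_gauge_smul (inv_pos.2 hs.1) hd
    simp only [inv_smul_smul₀ hs.1.ne'] at this
    exact this
  rw [h4, mul_zero, nonpos_iff_eq_zero, mul_eq_zero, ENNReal.ofReal_eq_zero] at h3
  refine h3.resolve_left (not_le.2 ?_)
  have : 0 < ‖w n‖ := norm_pos_iff.2 hw
  have : (0 : ℝ) < m := by exact_mod_cast hm
  positivity

theorem measurableSet_differentiableAt :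
    MeasurableSet {x | DifferentiableAt ℝ (gauge K) x} := measurableSet_of_differentiableAt ℝ _

theorem preimage_radial_eq (hK : IsCenteredBody K) {A : Set (Euc m)} (hA : A ⊆ frontier K) :
    (fun y => (gauge K y)⁻¹ • y) ⁻¹' A ∩ K = Ioc (0 : ℝ) 1 • A := by
  ext y
  constructor
  · rintro ⟨hy, hyK⟩
    have hy0 : y ≠ 0 := fun h => by
      have := hK.ne_zero_of_mem_frontier (hA hy)
      simp [h] at this
    have hg := hK.gauge_pos hy0
    exact ⟨gauge K y, ⟨hg, hK.mem_iff.1 hyK⟩, _, hy, smul_inv_smul₀ hg.ne' y⟩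
  · rintro ⟨s, hs, x, hx, rfl⟩
    have hg : gauge K (s • x) = s := by
      rw [gauge_smul s hs.1, hK.mem_frontier_iff.1 (hA hx), mul_one]
    refine ⟨?_, hK.mem_iff.2 (hg.trans_le hs.2)⟩
    simpa only [mem_preimage, hg, inv_smul_smul₀ hs.1.ne'] using hx

theorem measurable_radial (hK : IsCenteredBody K) :
    Measurable fun y => (gauge K y)⁻¹ • y :=
  hK.continuous_gauge.measurable.inv.smul measurable_id

theorem gradient_gauge_eq_polarNormal (hK : IsCenteredBody K) {x : Euc m} (hx : x ∈ frontier K)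
    (hd : DifferentiableAt ℝ (gauge K) x) : gradient (gauge K) x = polarNormal K x := by
  rw [hK.gradient_gauge_eq (hK.ne_zero_of_mem_frontier hx) hd, hK.mem_frontier_iff.1 hx, inv_one,
    one_smul]

theorem weighted_area_comparison (hK : IsCenteredBody K) (hm : 1 ≤ m) {A : Set (Euc m)}
    (hA : A ⊆ frontier K) (hAm : MeasurableSet A)
    (hAd : ∀ x ∈ A, DifferentiableAt ℝ (gauge K) x) {w : Euc m} {θ : ℝ} (hθ : 1 < θ)
    (hwA : ∀ x ∈ A, ‖gradient (gauge K) x - w‖ < (1 - θ⁻¹) * ‖w‖) :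
    m * volume (Ioc (0 : ℝ) 1 • A) ≤ ENNReal.ofReal θ ^ (2 * m + 1) *
      ∫⁻ x in A, ENNReal.ofReal ‖gradient (gauge K) x‖⁻¹ ∂μHE[m - 1] ∧
    ∫⁻ x in A, ENNReal.ofReal ‖gradient (gauge K) x‖⁻¹ ∂μHE[m - 1] ≤
      ENNReal.ofReal θ ^ (2 * m + 1) * (m * volume (Ioc (0 : ℝ) 1 • A)) := by
  rcases A.eq_empty_or_nonempty with h | ⟨x, hx⟩
  · simp [h]
  have hw := ne_zero_of_norm_sub_lt (hwA x hx)
  have hw' : 0 < ‖w‖ := norm_pos_iff.2 hw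
  have hθ0 : 0 < θ := by linarith
  have hm0 : (0 : ℝ) < m := by exact_mod_cast hm
  obtain ⟨h1, h2⟩ := hK.cone_comparison hm hA hw hθ fun x hx => by
    rw [← hK.gradient_gauge_eq_polarNormal (hA hx) (hAd x hx)]; exact hwA x hx
  have hmul : ∀ c : ℝ≥0∞, (m : ℝ≥0∞) * (ENNReal.ofReal (‖w‖⁻¹ * (m : ℝ)⁻¹) * c) =
      ENNReal.ofReal ‖w‖⁻¹ * c := fun c => by
    rw [← mul_assoc, ← ENNReal.ofReal_natCast, ← ENNReal.ofReal_mul hm0.le]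
    congr 2
    field_simp
  have hlow : ∀ x ∈ A, θ⁻¹ * ‖w‖ ≤ ‖gradient (gauge K) x‖ := fun x hx => by
    have h3 := norm_sub_norm_le w (gradient (gauge K) x)
    rw [norm_sub_rev] at h3
    linarith [hwA x hx]
  have hup : ∀ x ∈ A, ‖gradient (gauge K) x‖ ≤ θ * ‖w‖ := fun x hx => by
    have h3 := norm_sub_norm_le (gradient (gauge K) x) w
    have h4 : 1 + (1 - θ⁻¹) ≤ θ := by
      have : θ + θ⁻¹ - 2 = (θ - 1) ^ 2 * θ⁻¹ := by field_simp; ring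
      have : 0 ≤ (θ - 1) ^ 2 * θ⁻¹ := by positivity
      linarith
    nlinarith [hwA x hx]
  constructor
  · calc _ ≤ (m : ℝ≥0∞) * (ENNReal.ofReal θ ^ (2 * m) *
          (ENNReal.ofReal (‖w‖⁻¹ * (m : ℝ)⁻¹) * μHE[m - 1] A)) := by gcongr
      _ = ENNReal.ofReal θ ^ (2 * m) * (ENNReal.ofReal ‖w‖⁻¹ * μHE[m - 1] A) := by
        rw [mul_left_comm, hmul]
      _ = ENNReal.ofReal θ ^ (2 * m) * ∫⁻ x in A, ENNReal.ofReal ‖w‖⁻¹ ∂μHE[m - 1] := by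
        rw [setLIntegral_const]
      _ ≤ ENNReal.ofReal θ ^ (2 * m) *
          ∫⁻ x in A, ENNReal.ofReal θ * ENNReal.ofReal ‖gradient (gauge K) x‖⁻¹ ∂μHE[m - 1] := by
        refine mul_le_mul_right (setLIntegral_mono' hAm fun x hx => ?_) _
        rw [← ENNReal.ofReal_mul hθ0.le]
        refine ENNReal.ofReal_le_ofReal ?_
        have h5 := hlow x hx
        have h6 : 0 < ‖gradient (gauge K) x‖ := lt_of_lt_of_le (by positivity) h5
        have h7 := hup x hx
        rw [← div_eq_mul_inv, inv_eq_one_div, div_le_div_iff₀ hw' h6, one_mul]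
        exact h7
      _ = _ := by
        rw [lintegral_const_mul' _ _ ENNReal.ofReal_ne_top, pow_succ]
        ring
  · calc _ ≤ ∫⁻ x in A, ENNReal.ofReal θ * ENNReal.ofReal ‖w‖⁻¹ ∂μHE[m - 1] := by
          refine setLIntegral_mono' hAm fun x hx => ?_
          rw [← ENNReal.ofReal_mul hθ0.le]
          refine ENNReal.ofReal_le_ofReal ?_
          have h5 := hlow x hx
          have h6 : 0 < ‖gradient (gauge K) x‖ := lt_of_lt_of_le (by positivity) h5
          rw [inv_mul_le_iff₀ hθ0] at h5
          rw [← div_eq_mul_inv, inv_eq_one_div, div_le_div_iff₀ h6 hw', one_mul]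
          exact h5
      _ = ENNReal.ofReal θ * (m * (ENNReal.ofReal (‖w‖⁻¹ * (m : ℝ)⁻¹) * μHE[m - 1] A)) := by
        rw [setLIntegral_const, hmul, mul_assoc]
      _ ≤ ENNReal.ofReal θ * (m * (ENNReal.ofReal θ ^ (2 * m) *
          volume (Ioc (0 : ℝ) 1 • A))) := by gcongr
      _ = _ := by rw [pow_succ]; ring

/-- The cone volume measure of a body equals its area measure weighted by the support function. -/
theorem withDensity_eq_map_radial (hK : IsCenteredBody K) (hm : 1 ≤ m) :
    (μHE[m - 1].restrict (frontier K)).withDensity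
        (fun x => ENNReal.ofReal ‖gradient (gauge K) x‖⁻¹) =
      (m : ℝ≥0∞) • Measure.map (fun y => (gauge K y)⁻¹ • y) (volume.restrict K) := by
  have : Nonempty (Fin m) := ⟨⟨0, hm⟩⟩
  set D := {x | DifferentiableAt ℝ (gauge K) x} with hD
  set w := TopologicalSpace.denseSeq (Euc m)
  set μ₁ := (μHE[m - 1].restrict (frontier K)).withDensity
        (fun x => ENNReal.ofReal ‖gradient (gauge K) x‖⁻¹) with hμ₁
  set μ₂ := (m : ℝ≥0∞) • Measure.map (fun y => (gauge K y)⁻¹ • y) (volume.restrict K) with hμ₂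
  have hDm : MeasurableSet D := measurableSet_differentiableAt
  have hfm : MeasurableSet (frontier K) := isClosed_frontier.measurableSet
  have hGm := measurable_gradient (gauge K)
  let s : ℝ → ℕ → Set (Euc m) := fun θ n =>
    (frontier K ∩ D) ∩ {x | ‖gradient (gauge K) x - w n‖ < (1 - θ⁻¹) * ‖w n‖}
  have hsm : ∀ θ n, MeasurableSet (s θ n) := fun θ n =>
    (hfm.inter hDm).inter (measurableSet_lt (hGm.sub_const _).norm measurable_const)
  have hsU : ∀ θ, 1 < θ → (⋃ n, s θ n) = frontier K ∩ D := fun θ hθ => by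
    refine subset_antisymm (iUnion_subset fun n => inter_subset_left) fun x hx => ?_
    have h0 : gradient (gauge K) x ≠ 0 := by
      rw [hK.gradient_gauge_eq_polarNormal hx.1 hx.2]
      exact hK.polarNormal_ne_zero hx.1
    obtain ⟨n, hn⟩ := exists_denseSeq_near h0 hθ
    exact mem_iUnion.2 ⟨n, hx, hn⟩
  have hμ₁0 : μ₁ (frontier K ∩ D)ᶜ = 0 := by
    refine withDensity_absolutelyContinuous _ _ ?_
    rw [Measure.restrict_apply (hfm.inter hDm).compl]
    refine measure_mono_null ?_ (hK.measure_frontier_not_differentiableAt hm)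
    rintro x ⟨h1, h2⟩
    exact ⟨h2, fun h => h1 ⟨h2, h⟩⟩
  have hμ₂0 : μ₂ (frontier K ∩ D)ᶜ = 0 := by
    rw [hμ₂, Measure.smul_apply, Measure.map_apply hK.measurable_radial (hfm.inter hDm).compl]
    refine (smul_eq_zero_of_right _ ?_)
    refine Measure.absolutelyContinuous_of_le Measure.restrict_le_self ?_
    refine measure_mono_null (t := {0} ∪ Dᶜ) ?_
      (measure_union_null (measure_singleton 0) (ae_iff.1 hK.ae_differentiableAt_gauge))
    intro y hy
    by_cases h0 : y = 0
    · exact Or.inl h0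
    · exact Or.inr fun h => hy ⟨hK.inv_gauge_smul_mem_frontier h0,
        differentiableAt_gauge_smul (inv_pos.2 (hK.gauge_pos h0)) h⟩
  have hval₁ : ∀ θ n A, A ⊆ s θ n → MeasurableSet A → μ₁ A =
      ∫⁻ x in A, ENNReal.ofReal ‖gradient (gauge K) x‖⁻¹ ∂μHE[m - 1] := fun θ n A hA hAm => by
    rw [hμ₁, withDensity_apply _ hAm, Measure.restrict_restrict hAm,
      inter_eq_left.2 fun x hx => (hA hx).1.1]
  have hval₂ : ∀ θ n A, A ⊆ s θ n → MeasurableSet A → μ₂ A =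
      m * volume (Ioc (0 : ℝ) 1 • A) := fun θ n A hA hAm => by
    rw [hμ₂, Measure.smul_apply, Measure.map_apply hK.measurable_radial hAm,
      Measure.restrict_apply (hK.measurable_radial hAm),
      hK.preimage_radial_eq fun x hx => (hA hx).1.1, smul_eq_mul]
  have key : ∀ θ : ℝ, 1 < θ → μ₁ ≤ (ENNReal.ofReal θ ^ (2 * m + 1)) • μ₂ ∧
      μ₂ ≤ (ENNReal.ofReal θ ^ (2 * m + 1)) • μ₁ := fun θ hθ => by
    have hcmp := fun n A (hA : A ⊆ s θ n) (hAm : MeasurableSet A) =>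
      hK.weighted_area_comparison hm (fun x hx => (hA hx).1.1) hAm (fun x hx => (hA hx).1.2) hθ
        (fun x hx => (hA hx).2)
    constructor
    · refine measure_le_of_countable_cover (hsm θ) (by rw [hsU θ hθ]; exact hμ₁0) fun n A hA hAm => ?_
      rw [Measure.smul_apply, hval₁ θ n A hA hAm, hval₂ θ n A hA hAm]
      exact (hcmp n A hA hAm).2
    · refine measure_le_of_countable_cover (hsm θ) (by rw [hsU θ hθ]; exact hμ₂0) fun n A hA hAm => ?_
      rw [hval₂ θ n A hA hAm, Measure.smul_apply, hval₁ θ n A hA hAm]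
      exact (hcmp n A hA hAm).1
  refine le_antisymm ?_ ?_
  · refine Measure.le_iff'.2 fun A => ENNReal.le_of_forall_one_lt_le_pow_mul (2 * m + 1) fun θ hθ => ?_
    exact Measure.le_iff'.1 (key θ hθ).1 A
  · refine Measure.le_iff'.2 fun A => ENNReal.le_of_forall_one_lt_le_pow_mul (2 * m + 1) fun θ hθ => ?_
    exact Measure.le_iff'.1 (key θ hθ).2 A

end IsCenteredBody

theorem exists_hausdorffMeasure_eq_smul {m : ℕ} (hm : 1 ≤ m) : ∃ c : ℝ≥0∞, c ≠ 0 ∧ c ≠ ⊤ ∧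
    (μH[(m : ℝ) - 1] : Measure (Euc m)) = c • μHE[m - 1] := by
  have hcast : (m : ℝ) - 1 = ((m - 1 : ℕ) : ℝ) := by rw [Nat.cast_sub hm, Nat.cast_one]
  have h0 := Measure.addHaarScalarFactor_volume_hausdorffMeasure_ne_zero (m - 1)
  rw [hcast, Measure.euclideanHausdorffMeasure_def]
  refine ⟨_, ENNReal.coe_ne_zero.2 (inv_ne_zero h0), ENNReal.coe_ne_top, ?_⟩
  rw [← ENNReal.smul_def, smul_smul, inv_mul_cancel₀ h0, one_smul]

namespace IsCenteredBody

variable {m : ℕ} {K : Set (Euc m)}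

theorem gaussMap_ae_eq (hK : IsCenteredBody K) (hm : 1 ≤ m) :
    gaussMap K =ᵐ[μHE[m - 1].restrict (frontier K)]
      fun x => ‖gradient (gauge K) x‖⁻¹ • gradient (gauge K) x := by
  rw [Filter.EventuallyEq, ae_restrict_iff' isClosed_frontier.measurableSet, ae_iff]
  refine measure_mono_null ?_ (hK.measure_frontier_not_differentiableAt hm)
  intro x hx
  simp only [mem_ofPred_eq, Classical.not_imp] at hx
  refine ⟨hx.1, fun hd => hx.2 ?_⟩
  rw [hK.gradient_gauge_eq_polarNormal hx.1 hd]
  exact hK.gaussMap_eq hx.1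

/-- Integrals of positively homogeneous functions against the surface area measure, as integrals
over the body. -/
theorem lintegral_surfMeasure (hK : IsCenteredBody K) (hm : 1 ≤ m) {c : ℝ≥0∞}
    (hc : (μH[(m : ℝ) - 1] : Measure (Euc m)) = c • μHE[m - 1]) {f : Euc m → ℝ≥0∞}
    (hf : Measurable f) (hfs : ∀ s : ℝ, 0 < s → ∀ v, f (s • v) = ENNReal.ofReal s * f v) :
    ∫⁻ v, f v ∂surfMeasure K = c * (m * ∫⁻ y in K, f (gradient (gauge K) y)) := by
  have : Nonempty (Fin m) := ⟨⟨0, hm⟩⟩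
  have hG := measurable_gradient (gauge K)
  have hae := hK.gaussMap_ae_eq hm
  have haem : AEMeasurable (gaussMap K) (μHE[m - 1].restrict (frontier K)) :=
    ⟨_, hG.norm.inv.smul hG, hae⟩
  rw [surfMeasure, hc, Measure.restrict_smul, Measure.map_smul, lintegral_smul_measure, smul_eq_mul,
    lintegral_map' hf.aemeasurable haem]
  congr 1
  have hmap := hK.withDensity_eq_map_radial hm
  calc ∫⁻ x in frontier K, f (gaussMap K x) ∂μHE[m - 1]
      = ∫⁻ x in frontier K, ENNReal.ofReal ‖gradient (gauge K) x‖⁻¹ *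
          f (gradient (gauge K) x) ∂μHE[m - 1] := by
        refine lintegral_congr_ae ?_
        have h2 : ∀ᵐ x ∂μHE[m - 1].restrict (frontier K), DifferentiableAt ℝ (gauge K) x ∧
            x ∈ frontier K := by
          rw [ae_restrict_iff' isClosed_frontier.measurableSet, ae_iff]
          refine measure_mono_null ?_ (hK.measure_frontier_not_differentiableAt hm)
          intro x hx
          simp only [mem_ofPred_eq, Classical.not_imp] at hx
          exact ⟨hx.1, fun hd => hx.2 ⟨hd, hx.1⟩⟩
        filter_upwards [hae, h2] with x hx hx2
        rw [hx]
        refine hfs _ (inv_pos.2 (norm_pos_iff.2 ?_)) _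
        rw [hK.gradient_gauge_eq_polarNormal hx2.2 hx2.1]
        exact hK.polarNormal_ne_zero hx2.2
    _ = ∫⁻ x, f (gradient (gauge K) x) ∂(m : ℝ≥0∞) •
          Measure.map (fun y => (gauge K y)⁻¹ • y) (volume.restrict K) := by
        rw [← hmap]
        exact (lintegral_withDensity_eq_lintegral_mul _ hG.norm.inv.ennreal_ofReal
          (hf.comp hG)).symm
    _ = m * ∫⁻ y in K, f (gradient (gauge K) ((gauge K y)⁻¹ • y)) := by
        rw [lintegral_smul_measure, smul_eq_mul]
        exact congrArg _ (lintegral_map (hf.comp hG) hK.measurable_radial)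
    _ = _ := by
        congr 1
        refine lintegral_congr_ae (ae_restrict_of_ae ?_)
        have h0 : ∀ᵐ y : Euc m, y ≠ 0 := by
          rw [ae_iff]; simp
        filter_upwards [hK.ae_differentiableAt_gauge, h0] with y hd hy
        rw [hK.gradient_gauge_smul (inv_pos.2 (hK.gauge_pos hy)) hy hd]

end IsCenteredBody

theorem Real.volume_add_le_of_isCompact {C D : Set ℝ} (hC : IsCompact C) (hD : IsCompact D)
    (hC0 : C.Nonempty) (hD0 : D.Nonempty) : volume C + volume D ≤ volume (C + D) := by
  obtain ⟨c, hc, hcmax⟩ := hC.exists_isGreatest hC0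
  obtain ⟨d, hd, hdmin⟩ := hD.exists_isLeast hD0
  have hnull : AEDisjoint volume (C + {d}) ({c} + D) := by
    refine measure_mono_null (t := {c + d}) ?_ (by simp)
    rintro _ ⟨⟨x, hx, _, rfl, rfl⟩, ⟨_, rfl, y, hy, hxy⟩⟩
    have h1 := hcmax hx
    have h2 := hdmin hy
    simp only [mem_singleton_iff] at *
    linarith
  have hmeas : NullMeasurableSet ({c} + D) volume := by
    have : IsCompact ({c} + D) := isCompact_singleton.add hD
    exact this.measurableSet.nullMeasurableSet
  calc volume C + volume D = volume (C + {d}) + volume ({c} + D) := by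
        simp [singleton_add, add_singleton, image_add_left, image_add_right]
    _ = volume ((C + {d}) ∪ ({c} + D)) := (measure_union₀ hmeas hnull).symm
    _ ≤ volume (C + D) := measure_mono (union_subset
        (add_subset_add_left (singleton_subset_iff.2 hd))
        (add_subset_add_right (singleton_subset_iff.2 hc)))

/-- The one-dimensional Brunn–Minkowski inequality. -/
theorem Real.volume_add_le {A B : Set ℝ} (hA : MeasurableSet A) (hB : MeasurableSet B)
    (hA0 : A.Nonempty) (hB0 : B.Nonempty) : volume A + volume B ≤ volume (A + B) := by
  have key : ∀ C ⊆ A, IsCompact C → ∀ D ⊆ B, IsCompact D →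
      volume C + volume D ≤ volume (A + B) := by
    obtain ⟨x, hx⟩ := hA0
    obtain ⟨y, hy⟩ := hB0
    intro C hCA hC D hDB hD
    calc volume C + volume D ≤ volume (insert x C) + volume (insert y D) := by
          gcongr <;> exact subset_insert _ _
      _ ≤ volume (insert x C + insert y D) :=
        Real.volume_add_le_of_isCompact (hC.insert x) (hD.insert y) (insert_nonempty _ _)
          (insert_nonempty _ _)
      _ ≤ volume (A + B) := measure_mono
        (add_subset_add (insert_subset hx hCA) (insert_subset hy hDB))
  rw [hA.measure_eq_iSup_isCompact volume, hB.measure_eq_iSup_isCompact volume]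
  simp only [iSup_and']
  exact ENNReal.biSup_add_biSup_le' (p := fun C => C ⊆ A ∧ IsCompact C)
    (q := fun D => D ⊆ B ∧ IsCompact D) ⟨∅, by simp⟩ ⟨∅, by simp⟩
    fun C hC D hD => key C hC.1 hC.2 D hD.1 hD.2

theorem ENNReal.geom_mean_le_arith_mean2_weighted {a b : ℝ} (ha : 0 < a) (hb : 0 < b)
    (hab : a + b = 1) (p q : ℝ≥0∞) :
    p ^ a * q ^ b ≤ ENNReal.ofReal a * p + ENNReal.ofReal b * q := by
  have hpq : (a⁻¹).HolderConjugate b⁻¹ := by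
    rw [Real.holderConjugate_iff]
    refine ⟨(one_lt_inv₀ ha).2 (by linarith), by simpa using hab⟩
  have := ENNReal.young_inequality (p ^ a) (q ^ b) hpq
  rw [← ENNReal.rpow_mul, ← ENNReal.rpow_mul, mul_inv_cancel₀ ha.ne', mul_inv_cancel₀ hb.ne',
    ENNReal.rpow_one, ENNReal.rpow_one, ENNReal.ofReal_inv_of_pos ha, ENNReal.ofReal_inv_of_pos hb,
    div_eq_mul_inv, div_eq_mul_inv, inv_inv, inv_inv] at this
  rwa [mul_comm _ p, mul_comm _ q]

/-- Layer cake formula for functions bounded by `1`. -/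
theorem lintegral_eq_lintegral_Ioo_meas_lt {α : Type*} [MeasurableSpace α] (μ : Measure α)
    {f : α → ℝ≥0∞} (hf : Measurable f) (hf1 : ∀ x, f x ≤ 1) :
    ∫⁻ x, f x ∂μ = ∫⁻ t in Ioo (0 : ℝ) 1, μ {x | ENNReal.ofReal t < f x} := by
  have hfin : ∀ x, f x ≠ ∞ := fun x => ((hf1 x).trans_lt ENNReal.one_lt_top).ne
  have h := lintegral_eq_lintegral_meas_lt μ (f := fun x => (f x).toReal)
    (Filter.Eventually.of_forall fun x => ENNReal.toReal_nonneg) hf.ennreal_toReal.aemeasurable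
  simp only [ENNReal.ofReal_toReal (hfin _)] at h
  rw [h, ← Ioo_union_Ici_eq_Ioi (zero_lt_one' ℝ), lintegral_union measurableSet_Ici
    (by rw [Set.disjoint_left]; rintro x ⟨_, h1⟩ h2; exact absurd h2 (not_le.2 h1))]
  have h0 : ∫⁻ t in Ici (1 : ℝ), μ {x | t < (f x).toReal} = 0 := by
    refine (setLIntegral_congr_fun (g := fun _ => 0) measurableSet_Ici fun t ht => ?_).trans (by simp)
    have : {x | t < (f x).toReal} = ∅ := by
      refine eq_empty_of_forall_notMem fun x hx => ?_
      have := ENNReal.toReal_mono ENNReal.one_ne_top (hf1 x)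
      simp only [ENNReal.toReal_one, mem_Ici, mem_ofPred_eq] at *
      linarith
    simp [this]
  rw [h0, add_zero]
  refine setLIntegral_congr_fun measurableSet_Ioo fun t ht => ?_
  simp only [ENNReal.ofReal_lt_iff_lt_toReal ht.1.le (hfin _)]

/-- The one-dimensional Prékopa–Leindler inequality for functions with supremum `1`. -/
theorem Real.prekopa_leindler_of_iSup_eq_one {a b : ℝ} (ha : 0 < a) (hb : 0 < b) (hab : a + b = 1)
    {f g h : ℝ → ℝ≥0∞} (hf : Measurable f) (hg : Measurable g) (hh : Measurable h)
    (hf1 : ⨆ x, f x = 1) (hg1 : ⨆ x, g x = 1) (hh1 : ∀ x, h x ≤ 1)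
    (hfgh : ∀ x y, f x ^ a * g y ^ b ≤ h (a * x + b * y)) :
    ENNReal.ofReal a * (∫⁻ x, f x) + ENNReal.ofReal b * (∫⁻ x, g x) ≤ ∫⁻ x, h x := by
  rw [lintegral_eq_lintegral_Ioo_meas_lt _ hf fun x => hf1 ▸ le_iSup f x,
    lintegral_eq_lintegral_Ioo_meas_lt _ hg fun x => hg1 ▸ le_iSup g x,
    lintegral_eq_lintegral_Ioo_meas_lt _ hh hh1, ← lintegral_const_mul', ← lintegral_const_mul',
    ← lintegral_add_left]
  rotate_left
  · refine Measurable.const_mul ?_ _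
    refine Antitone.measurable fun s t hst => measure_mono fun x hx => ?_
    exact (ENNReal.ofReal_le_ofReal hst).trans_lt hx
  · simp
  · simp
  refine setLIntegral_mono' measurableSet_Ioo fun t ht => ?_
  have hlt : ENNReal.ofReal t < 1 := by simpa using ht.2
  obtain ⟨x₀, hx₀⟩ := lt_iSup_iff.1 (hf1 ▸ hlt : ENNReal.ofReal t < ⨆ x, f x)
  obtain ⟨y₀, hy₀⟩ := lt_iSup_iff.1 (hg1 ▸ hlt : ENNReal.ofReal t < ⨆ x, g x)
  have hsub : a • {x | ENNReal.ofReal t < f x} + b • {x | ENNReal.ofReal t < g x} ⊆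
      {x | ENNReal.ofReal t < h x} := by
    rintro _ ⟨_, ⟨x, hx, rfl⟩, _, ⟨y, hy, rfl⟩, rfl⟩
    refine lt_of_lt_of_le ?_ (hfgh x y)
    calc ENNReal.ofReal t = ENNReal.ofReal t ^ a * ENNReal.ofReal t ^ b := by
          rw [← ENNReal.rpow_add_of_nonneg _ _ ha.le hb.le, hab, ENNReal.rpow_one]
      _ < f x ^ a * g y ^ b :=
        ENNReal.mul_lt_mul (ENNReal.rpow_lt_rpow hx ha) (ENNReal.rpow_lt_rpow hy hb)
  refine le_trans ?_ ((Real.volume_add_le ?_ ?_ ?_ ?_).trans (measure_mono hsub))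
  · simp [Measure.addHaar_smul, abs_of_pos ha, abs_of_pos hb]
  · exact (measurableSet_lt measurable_const hf).const_smul₀ a
  · exact (measurableSet_lt measurable_const hg).const_smul₀ b
  · exact ⟨_, smul_mem_smul_set hx₀⟩
  · exact ⟨_, smul_mem_smul_set hy₀⟩

theorem Real.prekopa_leindler_of_bounded {a b : ℝ} (ha : 0 < a) (hb : 0 < b) (hab : a + b = 1)
    {f g h : ℝ → ℝ≥0∞} (hf : Measurable f) (hg : Measurable g) (hh : Measurable h)
    (hf1 : ⨆ x, f x ≠ ∞) (hg1 : ⨆ x, g x ≠ ∞)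
    (hfgh : ∀ x y, f x ^ a * g y ^ b ≤ h (a * x + b * y)) :
    (∫⁻ x, f x) ^ a * (∫⁻ x, g x) ^ b ≤ ∫⁻ x, h x := by
  set α := ⨆ x, f x with hα
  set β := ⨆ x, g x with hβ
  rcases eq_or_ne α 0 with hα0 | hα0
  · have : f = 0 := funext fun x => by simpa using (ENNReal.iSup_eq_zero.1 hα0 x)
    simp [this, ha]
  rcases eq_or_ne β 0 with hβ0 | hβ0
  · have : g = 0 := funext fun x => by simpa using (ENNReal.iSup_eq_zero.1 hβ0 x)
    simp [this, hb]
  set γ := α ^ a * β ^ b with hγ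
  have hγ0 : γ ≠ 0 := mul_ne_zero (by simp [hα0, hf1]) (by simp [hβ0, hg1])
  have hγt : γ ≠ ∞ := ENNReal.mul_ne_top (by simp [hf1, ha.le]) (by simp [hg1, hb.le])
  have key := Real.prekopa_leindler_of_iSup_eq_one ha hb hab (f := fun x => α⁻¹ * f x)
    (g := fun x => β⁻¹ * g x) (h := fun x => min (γ⁻¹ * h x) 1) (hf.const_mul _) (hg.const_mul _)
    ((hh.const_mul _).min measurable_const)
    (by rw [← ENNReal.mul_iSup, ENNReal.inv_mul_cancel hα0 hf1])
    (by rw [← ENNReal.mul_iSup, ENNReal.inv_mul_cancel hβ0 hg1]) (fun x => min_le_right _ _) ?_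
  · rw [lintegral_const_mul _ hf, lintegral_const_mul _ hg] at key
    have h2 := (ENNReal.geom_mean_le_arith_mean2_weighted ha hb hab _ _).trans key
    have h3 : ∫⁻ x, min (γ⁻¹ * h x) 1 ≤ γ⁻¹ * ∫⁻ x, h x := by
      rw [← lintegral_const_mul _ hh]
      exact lintegral_mono fun x => min_le_left _ _
    have h4 := h2.trans h3
    rw [ENNReal.mul_rpow_of_nonneg _ _ ha.le, ENNReal.mul_rpow_of_nonneg _ _ hb.le,
      mul_mul_mul_comm, ENNReal.inv_rpow, ENNReal.inv_rpow, ← ENNReal.mul_inv] at h4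
    · exact (ENNReal.mul_le_mul_iff_right (ENNReal.inv_ne_zero.2 hγt) (ENNReal.inv_ne_top.2 hγ0)).1 h4
    · right; simp [hg1, hb.le]
    · left; simp [hf1, ha.le]
  · intro x y
    refine le_min ?_ ?_
    · rw [ENNReal.mul_rpow_of_nonneg _ _ ha.le, ENNReal.mul_rpow_of_nonneg _ _ hb.le,
        mul_mul_mul_comm, ENNReal.inv_rpow, ENNReal.inv_rpow, ← ENNReal.mul_inv]
      · gcongr; exact hfgh x y
      · right; simp [hg1, hb.le]
      · left; simp [hf1, ha.le]
    · refine mul_le_one' (ENNReal.rpow_le_one ?_ ha.le) (ENNReal.rpow_le_one ?_ hb.le)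
      · rw [← ENNReal.inv_mul_cancel hα0 hf1]; gcongr; exact le_iSup f x
      · rw [← ENNReal.inv_mul_cancel hβ0 hg1]; gcongr; exact le_iSup g y

theorem lintegral_eq_iSup_min {α : Type*} [MeasurableSpace α] (μ : Measure α)
    {f : α → ℝ≥0∞} (hf : Measurable f) :
    ∫⁻ x, f x ∂μ = ⨆ n : ℕ, ∫⁻ x, min (f x) n ∂μ := by
  rw [← lintegral_iSup (fun n => hf.min measurable_const)]
  · refine lintegral_congr fun x => ?_
    have : ⨆ n : ℕ, min (f x) n = f x ⊓ ⨆ n : ℕ, (n : ℝ≥0∞) := (inf_iSup_eq _ _).symm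
    rw [this, ENNReal.iSup_natCast, inf_top_eq]
  · intro i j hij x
    exact min_le_min le_rfl (by exact_mod_cast hij)

/-- The one-dimensional Prékopa–Leindler inequality. -/
theorem Real.prekopa_leindler {a b : ℝ} (ha : 0 < a) (hb : 0 < b) (hab : a + b = 1)
    {f g h : ℝ → ℝ≥0∞} (hf : Measurable f) (hg : Measurable g) (hh : Measurable h)
    (hfgh : ∀ x y, f x ^ a * g y ^ b ≤ h (a * x + b * y)) :
    (∫⁻ x, f x) ^ a * (∫⁻ x, g x) ^ b ≤ ∫⁻ x, h x := by
  have hiSup : ∀ {c : ℝ}, 0 < c → ∀ u : ℕ → ℝ≥0∞, (⨆ n, u n) ^ c = ⨆ n, u n ^ c :=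
    fun {c} hc u => (ENNReal.orderIsoRpow c hc).map_iSup u
  rw [lintegral_eq_iSup_min _ hf, lintegral_eq_iSup_min _ hg, hiSup ha, hiSup hb, ENNReal.iSup_mul]
  refine iSup_le fun n => ?_
  rw [ENNReal.mul_iSup]
  refine iSup_le fun k => ?_
  refine Real.prekopa_leindler_of_bounded ha hb hab (hf.min measurable_const)
    (hg.min measurable_const) hh ?_ ?_ fun x y => le_trans ?_ (hfgh x y)
  · exact ((iSup_le fun x => min_le_right _ _).trans_lt (ENNReal.natCast_lt_top n)).ne
  · exact ((iSup_le fun x => min_le_right _ _).trans_lt (ENNReal.natCast_lt_top k)).ne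
  · gcongr <;> exact min_le_left _ _

/-- The Prékopa–Leindler inequality. -/
theorem prekopa_leindler {n : ℕ} {a b : ℝ} (ha : 0 < a) (hb : 0 < b) (hab : a + b = 1)
    {f g h : (Fin n → ℝ) → ℝ≥0∞} (hf : Measurable f) (hg : Measurable g) (hh : Measurable h)
    (hfgh : ∀ x y, f x ^ a * g y ^ b ≤ h (a • x + b • y)) :
    (∫⁻ x, f x) ^ a * (∫⁻ x, g x) ^ b ≤ ∫⁻ x, h x := by
  induction n with
  | zero =>
    simp only [volume_pi, Measure.pi_of_empty _ (0 : Fin 0 → ℝ), lintegral_dirac]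
    simpa using hfgh 0 0
  | succ n ih =>
    have hmp := (volume_preserving_piFinSuccAbove (fun _ : Fin (n + 1) => ℝ) 0).symm
    have hslice : ∀ {f : (Fin (n + 1) → ℝ) → ℝ≥0∞}, Measurable f →
        ∫⁻ x, f x = ∫⁻ s : ℝ, ∫⁻ z : Fin n → ℝ, f (Fin.cons s z) := fun {f} hf => by
      rw [← hmp.lintegral_comp hf, Measure.volume_eq_prod,
        lintegral_prod (fun p => f ((MeasurableEquiv.piFinSuccAbove (fun _ => ℝ) 0).symm p))
          (hf.comp hmp.measurable).aemeasurable]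
      refine lintegral_congr fun s => lintegral_congr fun z => ?_
      simp [Fin.consEquiv]
    have hcons : Measurable fun p : ℝ × (Fin n → ℝ) => (Fin.cons p.1 p.2 : Fin (n + 1) → ℝ) := by
      simpa [Fin.consEquiv] using hmp.measurable
    have hint : ∀ {f : (Fin (n + 1) → ℝ) → ℝ≥0∞}, Measurable f →
        Measurable fun s : ℝ => ∫⁻ z : Fin n → ℝ, f (Fin.cons s z) := fun {f} hf =>
      (hf.comp hcons).lintegral_prod_right'
    have hsec : ∀ {f : (Fin (n + 1) → ℝ) → ℝ≥0∞}, Measurable f → ∀ s : ℝ,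
        Measurable fun z : Fin n → ℝ => f (Fin.cons s z) := fun {f} hf s =>
      (hf.comp hcons).comp measurable_prodMk_left
    rw [hslice hf, hslice hg, hslice hh]
    refine Real.prekopa_leindler ha hb hab (hint hf) (hint hg) (hint hh) fun s t => ?_
    refine ih (hsec hf s) (hsec hg t) (hsec hh _) fun x y => ?_
    convert hfgh (Fin.cons s x) (Fin.cons t y) using 2
    ext i
    refine Fin.cases ?_ (fun j => ?_) i <;> simp

/-- The multiplicative form of the Brunn–Minkowski inequality. -/
theorem volume_rpow_mul_volume_rpow_le {n : ℕ} {a b : ℝ} (ha : 0 < a) (hb : 0 < b)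
    (hab : a + b = 1) {K L : Set (EuclideanSpace ℝ (Fin n))} (hK : IsCompact K)
    (hL : IsCompact L) : volume K ^ a * volume L ^ b ≤ volume (a • K + b • L) := by
  have hmp := PiLp.volume_preserving_toLp (Fin n)
  have hKL : IsCompact (a • K + b • L) := (hK.smul a).add (hL.smul b)
  have hind : ∀ {S : Set (EuclideanSpace ℝ (Fin n))}, IsCompact S →
      Measurable (S.indicator (fun _ => (1 : ℝ≥0∞))) ∧
      ∫⁻ x : Fin n → ℝ, S.indicator (fun _ => 1) (WithLp.toLp 2 x) = volume S := fun {S} hS => by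
    have hm : Measurable (S.indicator (fun _ => (1 : ℝ≥0∞))) :=
      measurable_const.indicator hS.measurableSet
    refine ⟨hm, ?_⟩
    rw [hmp.lintegral_comp hm, lintegral_indicator hS.measurableSet]
    simp
  rw [← (hind hK).2, ← (hind hL).2, ← (hind hKL).2]
  refine prekopa_leindler ha hb hab ((hind hK).1.comp hmp.measurable)
    ((hind hL).1.comp hmp.measurable) ((hind hKL).1.comp hmp.measurable) fun x y => ?_
  by_cases hx : WithLp.toLp 2 x ∈ K
  · by_cases hy : WithLp.toLp 2 y ∈ L
    · have : a • WithLp.toLp 2 x + b • WithLp.toLp 2 y ∈ a • K + b • L :=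
        add_mem_add (smul_mem_smul_set hx) (smul_mem_smul_set hy)
      simp [hx, hy, this]
    · simp [hy, hb]
  · simp [hx, ha]

/-- The Brunn–Minkowski inequality for sets of positive volume. -/
theorem pow_add_le_volume_add {n : ℕ} {K L : Set (EuclideanSpace ℝ (Fin n))} (hK : IsCompact K)
    (hL : IsCompact L) {k l : ℝ} (hk : 0 < k) (hl : 0 < l)
    (hKk : ENNReal.ofReal (k ^ n) ≤ volume K) (hLl : ENNReal.ofReal (l ^ n) ≤ volume L) :
    ENNReal.ofReal ((k + l) ^ n) ≤ volume (K + L) := by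
  have hkl : 0 < k + l := by positivity
  have hscale : ∀ {S : Set (EuclideanSpace ℝ (Fin n))} {s : ℝ}, 0 < s →
      ENNReal.ofReal (s ^ n) ≤ volume S → 1 ≤ volume (s⁻¹ • S) := fun {S s} hs hS => by
    rw [Measure.addHaar_smul, finrank_euclideanSpace_fin, abs_of_pos (by positivity), inv_pow,
      ENNReal.ofReal_inv_of_pos (by positivity)]
    rw [← ENNReal.inv_mul_cancel (a := ENNReal.ofReal (s ^ n)) (by simp; positivity) (by simp)]
    gcongr
  have h := volume_rpow_mul_volume_rpow_le (a := k / (k + l)) (b := l / (k + l)) (by positivity)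
    (by positivity) (by field_simp) (hK.smul k⁻¹) (hL.smul l⁻¹)
  rw [smul_smul, smul_smul, show k / (k + l) * k⁻¹ = (k + l)⁻¹ by field_simp,
    show l / (k + l) * l⁻¹ = (k + l)⁻¹ by field_simp, ← smul_add] at h
  have h1 : 1 ≤ volume ((k + l)⁻¹ • (K + L)) := by
    refine le_trans ?_ h
    exact one_le_mul (ENNReal.one_le_rpow (hscale hk hKk) (by positivity))
      (ENNReal.one_le_rpow (hscale hl hLl) (by positivity))
  rw [Measure.addHaar_smul, finrank_euclideanSpace_fin, abs_of_pos (by positivity), inv_pow,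
    ENNReal.ofReal_inv_of_pos (by positivity)] at h1
  have h2 := mul_le_mul_right h1 (ENNReal.ofReal ((k + l) ^ n))
  rwa [mul_one, ← mul_assoc, ENNReal.mul_inv_cancel (by simp; positivity) (by simp), one_mul] at h2

/-- The support function of a set. -/
def supportFun {m : ℕ} (L : Set (Euc m)) (u : Euc m) : ℝ := sSup ((fun x => ⟪u, x⟫) '' L)

theorem continuous_supportFun {m : ℕ} {L : Set (Euc m)} (hL : IsCompact L) :
    Continuous (supportFun L) :=
  hL.continuous_sSup (f := fun u x => ⟪u, x⟫) (by fun_prop)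

theorem inner_le_supportFun {m : ℕ} {L : Set (Euc m)} (hL : IsCompact L) (u : Euc m) {x : Euc m}
    (hx : x ∈ L) : ⟪u, x⟫ ≤ supportFun L u :=
  le_csSup (hL.image (by fun_prop)).bddAbove ⟨x, hx, rfl⟩

theorem supportFun_le {m : ℕ} {L : Set (Euc m)} (hL : L.Nonempty) {u : Euc m} {a : ℝ}
    (h : ∀ x ∈ L, ⟪u, x⟫ ≤ a) : supportFun L u ≤ a :=
  csSup_le (hL.image _) (by rintro _ ⟨x, hx, rfl⟩; exact h x hx)

theorem supportFun_smul {m : ℕ} (L : Set (Euc m)) {s : ℝ} (hs : 0 < s) (u : Euc m) :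
    supportFun L (s • u) = s * supportFun L u := by
  have : (fun x => ⟪s • u, x⟫) '' L = s • ((fun x => ⟪u, x⟫) '' L) := by
    rw [← image_smul, image_image]
    simp only [inner_smul_left, conj_trivial, smul_eq_mul]
  rw [supportFun, supportFun, this, Real.sSup_smul_of_nonneg hs.le, smul_eq_mul]

theorem one_add_pow_le {x : ℝ} (hx : 0 ≤ x) (n : ℕ) :
    (1 + x) ^ (n + 1) ≤ 1 + (n + 1) * x * (1 + x) ^ n := by
  induction n with
  | zero => simp
  | succ n ih =>
    have h := mul_le_mul_of_nonneg_right ih (add_nonneg zero_le_one hx)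
    rw [← pow_succ] at h
    refine h.trans ?_
    have h1 : 1 ≤ (1 + x) ^ (n + 1) := one_le_pow₀ (by linarith)
    have h2 : x * 1 ≤ x * (1 + x) ^ (n + 1) := by gcongr
    rw [pow_succ] at h2
    rw [pow_succ (1 + x) n]
    push_cast
    nlinarith

namespace IsCenteredBody

variable {m : ℕ} {K L : Set (Euc m)}

theorem mem (hK : IsCenteredBody K) : (0 : Euc m) ∈ K := interior_subset hK.zero_mem

theorem supportFun_nonneg (hL : IsCenteredBody L) (u : Euc m) : 0 ≤ supportFun L u := by
  simpa using inner_le_supportFun hL.isCompact u hL.mem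

theorem supportFun_polarNormal (hK : IsCenteredBody K) {x : Euc m} (hx : x ∈ frontier K) :
    supportFun K (polarNormal K x) = 1 := by
  refine le_antisymm (supportFun_le ⟨0, hK.mem⟩ fun z hz => hK.inner_polarNormal_le_one hx hz) ?_
  rw [← hK.inner_polarNormal hx]
  exact inner_le_supportFun hK.isCompact _ (hK.isCompact.isClosed.frontier_subset hx)

theorem exists_supportFun_gradient_le (hK : IsCenteredBody K) (hL : IsCenteredBody L) :
    ∃ B : ℝ, 0 < B ∧ ∀ y, supportFun L (gradient (gauge K) y) ≤ B := by
  obtain ⟨C, hC⟩ := hK.convex.lipschitz_gauge hK.mem_nhds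
  obtain ⟨R, hR⟩ := (isCompact_closedBall (0 : Euc m) C).image
    (continuous_supportFun hL.isCompact) |>.bddAbove
  refine ⟨max R 1, by positivity, fun y => le_max_of_le_left (hR ⟨_, ?_, rfl⟩)⟩
  rw [mem_closedBall_zero_iff, gradient, LinearIsometryEquiv.norm_map]
  exact norm_fderiv_le_of_lipschitz ℝ hC

/-- Volume of a star-shaped set given by a radial perturbation of the gauge. -/
theorem volume_gauge_le_le (hK : IsCenteredBody K) {C : Set (Euc m)} (hC : MeasurableSet C)
    {ρ : Euc m → ℝ} (hρ : Measurable ρ) (hCs : ∀ s : ℝ, 0 < s → ∀ y ∈ C, s • y ∈ C)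
    (hρs : ∀ s : ℝ, 0 < s → ∀ y ∈ C, ρ (s • y) = ρ y) (hρ1 : ∀ y, 1 ≤ ρ y) :
    volume {y ∈ C | gauge K y ≤ ρ y} ≤ ∫⁻ y in K, ENNReal.ofReal (ρ y ^ m) := by
  refine ENNReal.le_of_forall_one_lt_le_pow_mul m fun θ hθ => ?_
  have hθ0 : 0 < θ := by linarith
  let s : ℕ → Set (Euc m) := fun n => C ∩ ρ ⁻¹' Ico (θ ^ n) (θ ^ (n + 1))
  have hsm : ∀ n, MeasurableSet (s n) := fun n => hC.inter (hρ measurableSet_Ico)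
  have hKm : MeasurableSet K := hK.isCompact.measurableSet
  have hdisj : Pairwise (Function.onFun Disjoint fun n => K ∩ s n) :=
    (pairwise_disjoint_on _).2 fun i j hij => disjoint_left.2 fun y hi hj => by
      have h1 : θ ^ (i + 1) ≤ θ ^ j := pow_le_pow_right₀ hθ.le hij
      exact absurd (hi.2.2.2.trans_le h1) (not_lt.2 hj.2.2.1)
  calc volume {y ∈ C | gauge K y ≤ ρ y}
      ≤ volume (⋃ n, θ ^ (n + 1) • (K ∩ s n)) := by
        refine measure_mono fun y hy => ?_
        obtain ⟨n, hn1, hn2⟩ := exists_nat_pow_near (hρ1 y) hθ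
        refine mem_iUnion.2 ⟨n, ?_⟩
        have hp : 0 < θ ^ (n + 1) := by positivity
        rw [mem_smul_set_iff_inv_smul_mem₀ hp.ne']
        refine ⟨?_, hCs _ (inv_pos.2 hp) y hy.1, ?_⟩
        · rw [hK.mem_iff, gauge_smul _ (inv_pos.2 hp), inv_mul_le_iff₀ hp, mul_one]
          exact hy.2.trans hn2.le
        · rw [mem_preimage, hρs _ (inv_pos.2 hp) y hy.1]
          exact ⟨hn1, hn2⟩
    _ ≤ ∑' n, volume (θ ^ (n + 1) • (K ∩ s n)) := measure_iUnion_le _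
    _ = ∑' n, ENNReal.ofReal θ ^ m * ∫⁻ _ in K ∩ s n, ENNReal.ofReal ((θ ^ n) ^ m) := by
        refine tsum_congr fun n => ?_
        rw [Measure.addHaar_smul, finrank_euclideanSpace_fin, abs_of_nonneg (by positivity),
          setLIntegral_const, ← mul_assoc, ← ENNReal.ofReal_pow hθ0.le,
          ← ENNReal.ofReal_mul (by positivity)]
        congr 2
        ring
    _ ≤ ∑' n, ENNReal.ofReal θ ^ m * ∫⁻ y in K ∩ s n, ENNReal.ofReal (ρ y ^ m) := by
        refine ENNReal.tsum_le_tsum fun n => mul_le_mul_right ?_ _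
        refine setLIntegral_mono' (hKm.inter (hsm n)) fun y hy => ENNReal.ofReal_le_ofReal ?_
        exact pow_le_pow_left₀ (by positivity) hy.2.2.1 m
    _ = ENNReal.ofReal θ ^ m * ∫⁻ y in ⋃ n, K ∩ s n, ENNReal.ofReal (ρ y ^ m) := by
        rw [ENNReal.tsum_mul_left, lintegral_iUnion (fun n => hKm.inter (hsm n)) hdisj]
    _ ≤ _ := mul_le_mul_right
        (lintegral_mono_set (iUnion_subset fun n => inter_subset_left)) _

theorem inner_gradient_gauge (hK : IsCenteredBody K) {y : Euc m} (hy : y ≠ 0)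
    (hd : DifferentiableAt ℝ (gauge K) y) : ⟪gradient (gauge K) y, y⟫ = gauge K y := by
  have hg := hK.gauge_pos hy
  have := hK.inner_polarNormal (hK.inv_gauge_smul_mem_frontier hy)
  rwa [← hK.gradient_gauge_eq hy hd, inner_smul_right, inv_mul_eq_one₀ hg.ne', eq_comm] at this

theorem inner_gradient_gauge_le (hK : IsCenteredBody K) {y : Euc m} (hy : y ≠ 0)
    (hd : DifferentiableAt ℝ (gauge K) y) {z : Euc m} (hz : z ∈ K) :
    ⟪gradient (gauge K) y, z⟫ ≤ 1 := by
  rw [hK.gradient_gauge_eq hy hd]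
  exact hK.inner_polarNormal_le_one (hK.inv_gauge_smul_mem_frontier hy) hz

theorem volume_add_smul_le (hK : IsCenteredBody K) (hL : IsCenteredBody L) (hm : 1 ≤ m) {ε : ℝ}
    (hε : 0 < ε) : volume (K + ε • L) ≤
      ∫⁻ y in K, ENNReal.ofReal ((1 + ε * supportFun L (gradient (gauge K) y)) ^ m) := by
  have : Nonempty (Fin m) := ⟨⟨0, hm⟩⟩
  set C : Set (Euc m) := {y | DifferentiableAt ℝ (gauge K) y} ∩ {0}ᶜ with hC
  have hCm : MeasurableSet C :=
    measurableSet_differentiableAt.inter (measurableSet_singleton 0).compl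
  have hCae : ∀ᵐ y : Euc m, y ∈ C := by
    have h0 : ∀ᵐ y : Euc m, y ≠ 0 := by rw [ae_iff]; simp
    filter_upwards [hK.ae_differentiableAt_gauge, h0] with y h1 h2 using ⟨h1, h2⟩
  refine le_trans ?_ (hK.volume_gauge_le_le hCm
    (ρ := fun y => 1 + ε * supportFun L (gradient (gauge K) y)) ?_ ?_ ?_ ?_)
  · refine measure_mono_ae ?_
    filter_upwards [hCae] with y hy hyKL
    refine ⟨hy, ?_⟩
    obtain ⟨k, hk, _, ⟨l, hl, rfl⟩, rfl⟩ := hyKL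
    rw [← hK.inner_gradient_gauge hy.2 hy.1, inner_add_right]
    refine add_le_add (hK.inner_gradient_gauge_le hy.2 hy.1 hk) ?_
    simp only [inner_smul_right]
    exact mul_le_mul_of_nonneg_left (inner_le_supportFun hL.isCompact _ hl) hε.le
  · exact (((continuous_supportFun hL.isCompact).measurable.comp
      (measurable_gradient _)).const_mul ε).const_add 1
  · exact fun s hs y hy => ⟨differentiableAt_gauge_smul hs hy.1, smul_ne_zero hs.ne' hy.2⟩
  · intro s hs y hy
    simp only [hK.gradient_gauge_smul hs hy.2 hy.1]
  · intro y
    have := mul_nonneg hε.le (hL.supportFun_nonneg (gradient (gauge K) y))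
    linarith

/-- Minkowski's first inequality. -/
theorem pow_mul_le_lintegral_supportFun (hK : IsCenteredBody K) (hL : IsCenteredBody L)
    (hm : 1 ≤ m) {k l : ℝ} (hk : 0 < k) (hl : 0 < l) (hKk : volume K = ENNReal.ofReal (k ^ m))
    (hLl : volume L = ENNReal.ofReal (l ^ m)) :
    ENNReal.ofReal (k ^ (m - 1) * l) ≤
      ∫⁻ y in K, ENNReal.ofReal (supportFun L (gradient (gauge K) y)) := by
  obtain ⟨n, rfl⟩ : ∃ n, m = n + 1 := ⟨m - 1, by omega⟩
  obtain ⟨B, hB, hBle⟩ := hK.exists_supportFun_gradient_le hL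
  refine ENNReal.le_of_forall_one_lt_le_pow_mul n fun θ hθ => ?_
  set ε := (θ - 1) / B with hε
  have hε0 : 0 < ε := div_pos (by linarith) hB
  have hεB : 1 + ε * B = θ := by rw [hε]; field_simp; ring
  have hθ0 : 0 < θ := by linarith
  have hLε : ENNReal.ofReal ((ε * l) ^ (n + 1)) ≤ volume (ε • L) := by
    rw [Measure.addHaar_smul, finrank_euclideanSpace_fin, hLl, abs_of_nonneg (by positivity),
      ← ENNReal.ofReal_mul (by positivity), mul_pow]
  have hbm := pow_add_le_volume_add hK.isCompact (hL.isCompact.smul ε) hk (mul_pos hε0 hl)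
    hKk.ge hLε
  have hmain : ENNReal.ofReal (k ^ (n + 1)) + ENNReal.ofReal ((n + 1) * ε) *
      ENNReal.ofReal (k ^ n * l) ≤ ENNReal.ofReal (k ^ (n + 1)) + ENNReal.ofReal ((n + 1) * ε) *
      (ENNReal.ofReal θ ^ n *
        ∫⁻ y in K, ENNReal.ofReal (supportFun L (gradient (gauge K) y))) := by
    calc _ = ENNReal.ofReal (k ^ (n + 1) + (n + 1) * k ^ n * (ε * l)) := by
          rw [← ENNReal.ofReal_mul (by positivity), ← ENNReal.ofReal_add (by positivity)
            (by positivity)]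
          congr 1
          ring
      _ ≤ ENNReal.ofReal ((k + ε * l) ^ (n + 1)) :=
          ENNReal.ofReal_le_ofReal (by
            simpa using pow_add_mul_le_add_pow hk.le
              (show 0 ≤ 2 * k + ε * l by positivity) (n + 1))
      _ ≤ _ := hbm
      _ ≤ _ := hK.volume_add_smul_le hL hm hε0
      _ ≤ ∫⁻ y in K, (1 + ENNReal.ofReal ((n + 1) * ε * θ ^ n) *
            ENNReal.ofReal (supportFun L (gradient (gauge K) y))) := by
          refine lintegral_mono fun y => ?_
          have h0 := hL.supportFun_nonneg (gradient (gauge K) y)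
          have h1 := hBle y
          set w := supportFun L (gradient (gauge K) y)
          rw [← ENNReal.ofReal_mul (by positivity), ← ENNReal.ofReal_one,
            ← ENNReal.ofReal_add zero_le_one (by positivity)]
          refine ENNReal.ofReal_le_ofReal ((one_add_pow_le (by positivity) n).trans ?_)
          have h2 : 1 + ε * w ≤ θ := by rw [← hεB]; gcongr
          have h3 : (1 + ε * w) ^ n ≤ θ ^ n := by gcongr
          calc 1 + (n + 1) * (ε * w) * (1 + ε * w) ^ n ≤ 1 + (n + 1) * (ε * w) * θ ^ n := by gcongr
            _ = _ := by ring
      _ = _ := by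
          rw [lintegral_add_left measurable_const, lintegral_const_mul' _ _ ENNReal.ofReal_ne_top,
            setLIntegral_const, one_mul, hKk, ENNReal.ofReal_mul (by positivity),
            ENNReal.ofReal_pow hθ0.le, mul_assoc]
  have h2 := (ENNReal.add_le_add_iff_left ENNReal.ofReal_ne_top).1 hmain
  rw [Nat.add_sub_cancel]
  refine (ENNReal.mul_le_mul_iff_right ?_ ENNReal.ofReal_ne_top).1 h2
  exact (ENNReal.ofReal_pos.2 (by positivity)).ne'

theorem lintegral_supportFun_self (hK : IsCenteredBody K) (hm : 1 ≤ m) :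
    ∫⁻ y in K, ENNReal.ofReal (supportFun K (gradient (gauge K) y)) = volume K := by
  have : Nonempty (Fin m) := ⟨⟨0, hm⟩⟩
  have h0 : ∀ᵐ y : Euc m, y ≠ 0 := by rw [ae_iff]; simp
  rw [← setLIntegral_one]
  refine lintegral_congr_ae (ae_restrict_of_ae ?_)
  filter_upwards [hK.ae_differentiableAt_gauge, h0] with y hd hy
  rw [hK.gradient_gauge_eq hy hd,
    hK.supportFun_polarNormal (hK.inv_gauge_smul_mem_frontier hy), ENNReal.ofReal_one]

end IsCenteredBody

theorem frontier_vadd_set {m : ℕ} (p : Euc m) (K : Set (Euc m)) :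
    frontier (p +ᵥ K) = p +ᵥ frontier K :=
  ((Homeomorph.addLeft p).image_frontier K).symm

theorem isOutwardNormalAt_vadd {m : ℕ} (p : Euc m) (K : Set (Euc m)) (x n : Euc m) :
    IsOutwardNormalAt (p +ᵥ K) (p + x) n ↔ IsOutwardNormalAt K x n := by
  have h1 : p + x ∈ frontier (p +ᵥ K) ↔ x ∈ frontier K := by
    rw [frontier_vadd_set]
    exact vadd_mem_vadd_set_iff
  have h2 : (∀ y ∈ p +ᵥ K, ⟪y - (p + x), n⟫ ≤ 0) ↔ ∀ y ∈ K, ⟪y - x, n⟫ ≤ 0 := by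
    rw [← image_vadd, forall_mem_image]
    simp only [vadd_eq_add, add_sub_add_left_eq_sub]
  rw [IsOutwardNormalAt, IsOutwardNormalAt, h1, h2]

theorem gaussMap_vadd {m : ℕ} (p : Euc m) (K : Set (Euc m)) (x : Euc m) :
    gaussMap (p +ᵥ K) (p + x) = gaussMap K x := by
  have h : IsOutwardNormalAt (p +ᵥ K) (p + x) = IsOutwardNormalAt K x :=
    funext fun n => propext (isOutwardNormalAt_vadd p K x n)
  unfold gaussMap
  rw [h]

theorem surfMeasure_vadd {m : ℕ} (p : Euc m) (K : Set (Euc m)) :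
    surfMeasure (p +ᵥ K) = surfMeasure K := by
  set e := (IsometryEquiv.addLeft p).toHomeomorph.toMeasurableEquiv with he
  have hex : ∀ x, e x = p + x := fun x => rfl
  set d := (m : ℝ) - 1
  have hmap : (μH[d] : Measure (Euc m)).map e = μH[d] :=
    ((IsometryEquiv.addLeft p).measurePreserving_hausdorffMeasure d).map_eq
  have hres : (μH[d] : Measure (Euc m)).restrict (frontier (p +ᵥ K)) =
      (μH[d].restrict (frontier K)).map e := by
    conv_lhs => rw [← hmap]
    rw [MeasurableEquiv.restrict_map]
    congr 2
    ext x
    rw [mem_preimage, hex, frontier_vadd_set]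
    exact vadd_mem_vadd_set_iff
  have hcomp : gaussMap (p +ᵥ K) ∘ e = gaussMap K := funext fun x => gaussMap_vadd p K x
  rw [surfMeasure, surfMeasure, hres, ← hcomp]
  by_cases h : AEMeasurable (gaussMap (p +ᵥ K)) ((μH[d].restrict (frontier K)).map e)
  · exact AEMeasurable.map_map_of_aemeasurable h e.measurable.aemeasurable
  · rw [Measure.map_of_not_aemeasurable h, Measure.map_of_not_aemeasurable]
    rwa [← e.measurableEmbedding.aemeasurable_map_iff]

theorem IsConvexBody.exists_isCenteredBody_vadd {m : ℕ} {K : Set (Euc m)} (hK : IsConvexBody K) :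
    ∃ p : Euc m, IsCenteredBody (p +ᵥ K) := by
  obtain ⟨hc, hk, q, hq⟩ := hK
  refine ⟨-q, hc.vadd _, hk.vadd _, ?_⟩
  exact ((Homeomorph.addLeft (-q)).image_interior K).subset ⟨q, hq, neg_add_cancel q⟩

theorem IsCenteredBody.exists_volume_eq_pow {m : ℕ} {K : Set (Euc m)} (hK : IsCenteredBody K)
    (hm : 1 ≤ m) : ∃ k : ℝ, 0 < k ∧ volume K = ENNReal.ofReal (k ^ m) ∧
      (volume K).toReal ^ (((m : ℝ) - 1) / m) = k ^ (m - 1) := by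
  have hpos : 0 < (volume K).toReal := ENNReal.toReal_pos
    (Measure.measure_pos_of_nonempty_interior _ ⟨0, hK.zero_mem⟩).ne' hK.isCompact.measure_lt_top.ne
  have hm0 : (m : ℝ) ≠ 0 := by exact_mod_cast (by omega : m ≠ 0)
  refine ⟨(volume K).toReal ^ (m : ℝ)⁻¹, Real.rpow_pos_of_pos hpos _, ?_, ?_⟩
  · rw [Real.rpow_inv_natCast_pow hpos.le (by omega),
      ENNReal.ofReal_toReal hK.isCompact.measure_lt_top.ne]
  · rw [← Real.rpow_natCast, ← Real.rpow_mul hpos.le, Nat.cast_sub hm, Nat.cast_one]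
    congr 1
    field_simp

theorem IsCenteredBody.pow_add_le {m : ℕ} (hm : 1 ≤ m) {K L M : Set (Euc m)}
    (hK : IsCenteredBody K) (hL : IsCenteredBody L) (hM : IsCenteredBody M) {t : ℝ} (ht : 0 ≤ t)
    (h : surfMeasure M + ENNReal.ofReal t • surfMeasure K = surfMeasure L) {a k l : ℝ}
    (ha : 0 < a) (hk : 0 < k) (hl : 0 < l) (hMa : volume M = ENNReal.ofReal (a ^ m))
    (hKk : volume K = ENNReal.ofReal (k ^ m)) (hLl : volume L = ENNReal.ofReal (l ^ m)) :
    a ^ (m - 1) + t * k ^ (m - 1) ≤ l ^ (m - 1) := by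
  obtain ⟨c, hc0, hct, hc⟩ := exists_hausdorffMeasure_eq_smul hm
  set f : Euc m → ℝ≥0∞ := fun v => ENNReal.ofReal (supportFun L v) with hf
  have hfm : Measurable f := (continuous_supportFun hL.isCompact).measurable.ennreal_ofReal
  have hfs : ∀ s : ℝ, 0 < s → ∀ v, f (s • v) = ENNReal.ofReal s * f v := fun s hs v => by
    simp only [hf]
    rw [supportFun_smul L hs, ENNReal.ofReal_mul hs.le]
  have h1 := congrArg (fun μ => ∫⁻ v, f v ∂μ) h
  simp only [lintegral_add_measure, lintegral_smul_measure, smul_eq_mul] at h1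
  rw [hM.lintegral_surfMeasure hm hc hfm hfs, hK.lintegral_surfMeasure hm hc hfm hfs,
    hL.lintegral_surfMeasure hm hc hfm hfs, hL.lintegral_supportFun_self hm, hLl] at h1
  have h2 := hM.pow_mul_le_lintegral_supportFun hL hm ha hl hMa hLl
  have h3 := hK.pow_mul_le_lintegral_supportFun hL hm hk hl hKk hLl
  have h4 : c * m * (ENNReal.ofReal (a ^ (m - 1) * l) +
      ENNReal.ofReal t * ENNReal.ofReal (k ^ (m - 1) * l)) ≤ c * m * ENNReal.ofReal (l ^ m) := by
    rw [mul_assoc c m (ENNReal.ofReal (l ^ m)), ← h1, mul_add, mul_assoc]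
    refine add_le_add (by gcongr) ?_
    rw [mul_left_comm, mul_assoc]
    gcongr
  have hm0 : (m : ℝ≥0∞) ≠ 0 := by exact_mod_cast (by omega : m ≠ 0)
  have h5 := (ENNReal.mul_le_mul_iff_right (mul_ne_zero hc0 hm0)
    (ENNReal.mul_ne_top hct (ENNReal.natCast_ne_top m))).1 h4
  rw [← ENNReal.ofReal_mul ht, ← ENNReal.ofReal_add (by positivity) (by positivity),
    ENNReal.ofReal_le_ofReal_iff (by positivity)] at h5
  refine le_of_mul_le_mul_right ?_ hl
  rw [← pow_succ, Nat.sub_add_cancel hm]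
  linarith

/-- the volume estimate in the proof of the monotonicity theorem:
if `S(M,·) = S(L,·) - t·S(K,·)` then
`Vol(L)^{(m-1)/m} ≥ Vol(M)^{(m-1)/m} + t Vol(K)^{(m-1)/m} ≥ t Vol(K)^{(m-1)/m}`. -/
theorem volume_estimate_decomposition {m : ℕ} (hm : 2 ≤ m)
    (K L M : Set (Euc m)) (hK : IsConvexBody K) (hL : IsConvexBody L)
    (hM : IsConvexBody M) (t : ℝ) (ht0 : 0 < t) (ht1 : t < 1)
    (hdom : ∀ U : Set (Euc m), MeasurableSet U → surfMeasure K U ≤ surfMeasure L U)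
    (hMeq : ∀ U : Set (Euc m), MeasurableSet U →
      surfMeasure M U + ENNReal.ofReal t * surfMeasure K U = surfMeasure L U) :
    (volume L).toReal ^ (((m:ℝ) - 1) / m) ≥
      (volume M).toReal ^ (((m:ℝ) - 1) / m) + t * (volume K).toReal ^ (((m:ℝ) - 1) / m) ∧
    (volume M).toReal ^ (((m:ℝ) - 1) / m) + t * (volume K).toReal ^ (((m:ℝ) - 1) / m) ≥
      t * (volume K).toReal ^ (((m:ℝ) - 1) / m) := by
  refine ⟨?_, le_add_of_nonneg_left (by positivity)⟩
  have hm1 : 1 ≤ m := by omega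
  obtain ⟨p, hK'⟩ := hK.exists_isCenteredBody_vadd
  obtain ⟨q, hL'⟩ := hL.exists_isCenteredBody_vadd
  obtain ⟨r, hM'⟩ := hM.exists_isCenteredBody_vadd
  obtain ⟨k, hk, hKk, hk'⟩ := hK'.exists_volume_eq_pow hm1
  obtain ⟨l, hl, hLl, hl'⟩ := hL'.exists_volume_eq_pow hm1
  obtain ⟨a, ha, hMa, ha'⟩ := hM'.exists_volume_eq_pow hm1
  have hsurf : surfMeasure (r +ᵥ M) + ENNReal.ofReal t • surfMeasure (p +ᵥ K) =
      surfMeasure (q +ᵥ L) := by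
    simp only [surfMeasure_vadd]
    exact Measure.ext fun U hU => hMeq U hU
  rw [measure_vadd] at hk' hl' ha'
  rw [hk', hl', ha']
  exact hK'.pow_add_le hm1 hL' hM' ht0.le hsurf ha hk hl hMa hKk hLl
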